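/- arXiv:1607.07205 — 9 statements merged into one kernel-verified Lean document; each statement's English description precedes it below -/
import Mathlib

section
/- Let K be a field, n ≥ 1, and X ∈ sl_n(K) a trace-zero matrix. Then X is sl_n(K)-regular if and only if X is gl_n(K)-regular and the trace map is nonzero on the unital K-subalgebra K[X] generated by X, i.e. there exists a polynomial p ∈ K[T] with tr(p(X)) ≠ 0. -/
open Matrix

/-- The centralizer of a matrix `X` inside all `n × n` matrices, as a submodule. -/
def glCent {R : Type*} [CommRing R] {n : ℕ} (X : Matrix (Fin n) (Fin n) R) :
    Submodule R (Matrix (Fin n) (Fin n) R) where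
  carrier := {Y | X * Y = Y * X}
  add_mem' := fun {a b} ha hb => by
    simp only [Set.mem_setOf_eq] at *
    rw [Matrix.mul_add, Matrix.add_mul, ha, hb]
  zero_mem' := by simp
  smul_mem' := fun c a ha => by
    simp only [Set.mem_setOf_eq] at *
    rw [Matrix.mul_smul, Matrix.smul_mul, ha]

/-- The centralizer of a matrix `X` inside the trace-zero `n × n` matrices, as a submodule. -/
def slCent {R : Type*} [CommRing R] {n : ℕ} (X : Matrix (Fin n) (Fin n) R) :
    Submodule R (Matrix (Fin n) (Fin n) R) where
  carrier := {Y | Y.trace = 0 ∧ X * Y = Y * X}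
  add_mem' := fun {a b} ha hb =>
    ⟨by rw [trace_add, ha.1, hb.1, add_zero],
     by rw [Matrix.mul_add, Matrix.add_mul, ha.2, hb.2]⟩
  zero_mem' := ⟨by simp, by simp⟩
  smul_mem' := fun c a ha =>
    ⟨by rw [trace_smul, ha.1, smul_zero],
     by rw [Matrix.mul_smul, Matrix.smul_mul, ha.2]⟩

/-!
`X` makes `K^n` a finitely generated torsion `K[T]`-module `M`, and the centralizer of `X` is the
endomorphism ring of `M`. By the structure theorem `M` is isomorphic to a product `A` of quotients
`K[T] ⧸ (a i)` with `a i ≠ 0`. Multiplications embed the ring `A` into its `K[T]`-endomorphisms, so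
the centralizer has dimension at least `n`. If the dimension is exactly `n`, then every endomorphism
of `A` is a multiplication; hence there is no nonzero map between distinct factors, the `a i` are
pairwise coprime, and by the Chinese remainder theorem every endomorphism is the action of a
polynomial, that is, the centralizer is `K[X]`.

The trace-zero centralizer is the kernel of the trace on the centralizer, so it has codimension one
or zero there according as the trace is nonzero or not. Codimension zero would make its dimension at
least `n`.
-/

section Multiplication

theorem linearMap_eq_zero_of_lmul_pi_surjective {R ι : Type*} [CommSemiring R] {A : ι → Type*}
    [∀ i, Semiring (A i)] [∀ i, Algebra R (A i)]
    (h : Function.Surjective (Algebra.lmul R (∀ i, A i))) {i j : ι} (hij : i ≠ j)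
    (f : A i →ₗ[R] A j) : f = 0 := by
  classical
  obtain ⟨b, hb⟩ := h (LinearMap.single R A j ∘ₗ f ∘ₗ LinearMap.proj i)
  ext x
  simpa [hij.symm] using (congrFun (LinearMap.congr_fun hb (Pi.single i x)) j).symm

variable (K R A : Type*) [Field K] [CommRing R] [Algebra K R] [Ring A] [Algebra R A] [Module K A]
  [IsScalarTower K R A] [FiniteDimensional K A]

theorem finrank_le_finrank_end_self :
    Module.finrank K A ≤ Module.finrank K (Module.End R A) :=
  LinearMap.finrank_le_finrank_of_injective
    (f := (Algebra.lmul R A).toLinearMap.restrictScalars K) Algebra.lmul_injective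

variable {K R A} in
theorem lmul_surjective_of_finrank_end_eq
    (h : Module.finrank K (Module.End R A) = Module.finrank K A) :
    Function.Surjective (Algebra.lmul R A) :=
  (LinearMap.injective_iff_surjective_of_finrank_eq_finrank
    (f := (Algebra.lmul R A).toLinearMap.restrictScalars K) h.symm).mp Algebra.lmul_injective

end Multiplication

section PrincipalIdealDomain

universe u

variable {R : Type u} [CommRing R] [IsDomain R]

theorem isRelPrime_of_forall_linearMap_quotient_eq_zero {a b : R} (hb : b ≠ 0)
    (h : ∀ f : (R ⧸ Ideal.span {a}) →ₗ[R] R ⧸ Ideal.span {b}, f = 0) : IsRelPrime a b := by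
  -- A common divisor `d`, with `b = d * c`, makes multiplication by `c` a map `R ⧸ (a) → R ⧸ (b)`.
  rintro d ⟨a', rfl⟩ ⟨c, rfl⟩
  have hmul : Ideal.span {d * a'} ≤
      Submodule.comap (LinearMap.mulLeft R c) (Ideal.span {d * c}) := by
    rw [Ideal.span_singleton_le_iff_mem, Submodule.mem_comap, LinearMap.mulLeft_apply,
      Ideal.mem_span_singleton]
    exact ⟨a', by ring⟩
  have hzero : Ideal.Quotient.mk (Ideal.span {d * c}) (c * 1) = 0 :=
    LinearMap.congr_fun (h (Submodule.mapQ _ _ (LinearMap.mulLeft R c) hmul)) 1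
  have hdvd : d * c ∣ 1 * c := by
    rwa [Ideal.Quotient.eq_zero_iff_mem, Ideal.mem_span_singleton, mul_comm c] at hzero
  exact isUnit_of_dvd_one ((mul_dvd_mul_iff_right (right_ne_zero_of_mul hb)).mp hdvd)

variable [IsPrincipalIdealRing R]

theorem algebraMap_end_pi_quotient_surjective {ι : Type*} [Finite ι] {a : ι → R}
    (ha : ∀ i, a i ≠ 0)
    (h : Function.Surjective (Algebra.lmul R (∀ i, R ⧸ Ideal.span {a i}))) :
    Function.Surjective (algebraMap R (Module.End R (∀ i, R ⧸ Ideal.span {a i}))) := by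
  have hcoprime : Pairwise (Function.onFun IsCoprime fun i ↦ Ideal.span {a i}) := fun i j hij ↦
    (Ideal.isCoprime_span_singleton_iff _ _).mpr <|
      (isRelPrime_of_forall_linearMap_quotient_eq_zero (ha j)
        (linearMap_eq_zero_of_lmul_pi_surjective h hij)).isCoprime
  intro f
  obtain ⟨b, rfl⟩ := h f
  obtain ⟨r, hr⟩ := Ideal.pi_quotient_surjective hcoprime b
  have hrb : algebraMap R _ r = b := funext hr
  exact ⟨r, by rw [← hrb, AlgHom.commutes]⟩

variable {M : Type*} [AddCommGroup M] [Module R M]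

theorem exists_linearEquiv_pi_quotient_span_of_isTorsion [Module.Finite R M]
    (hM : Module.IsTorsion R M) :
    ∃ (ι : Type u) (_ : Finite ι) (a : ι → R),
      (∀ i, a i ≠ 0) ∧ Nonempty (M ≃ₗ[R] ∀ i, R ⧸ Ideal.span {a i}) := by
  classical
  obtain ⟨ι, _, p, hp, e, ⟨E⟩⟩ := Module.equiv_directSum_of_isTorsion hM
  exact ⟨ι, inferInstance, fun i ↦ p i ^ e i, fun i ↦ pow_ne_zero _ (hp i).ne_zero,
    ⟨E.trans (DirectSum.linearEquivFunOnFintype R ι _)⟩⟩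

variable {K : Type*} [Field K] [Algebra K R] [Module K M] [IsScalarTower K R M]
  [FiniteDimensional K M]

theorem finrank_le_finrank_end_of_isTorsion (hM : Module.IsTorsion R M) :
    Module.finrank K M ≤ Module.finrank K (Module.End R M) := by
  have := Module.Finite.of_restrictScalars_finite K R M
  obtain ⟨ι, _, a, -, ⟨F⟩⟩ := exists_linearEquiv_pi_quotient_span_of_isTorsion hM
  have := Module.Finite.equiv (F.restrictScalars K)
  rw [(F.restrictScalars K).finrank_eq, (F.conjAlgEquiv K).toLinearEquiv.finrank_eq]
  exact finrank_le_finrank_end_self K R _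

theorem algebraMap_end_surjective_of_finrank_end_eq (hM : Module.IsTorsion R M)
    (h : Module.finrank K (Module.End R M) = Module.finrank K M) :
    Function.Surjective (algebraMap R (Module.End R M)) := by
  have := Module.Finite.of_restrictScalars_finite K R M
  obtain ⟨ι, _, a, ha, ⟨F⟩⟩ := exists_linearEquiv_pi_quotient_span_of_isTorsion hM
  have := Module.Finite.equiv (F.restrictScalars K)
  rw [(F.restrictScalars K).finrank_eq, (F.conjAlgEquiv K).toLinearEquiv.finrank_eq] at h
  have hsurj := algebraMap_end_pi_quotient_surjective ha (lmul_surjective_of_finrank_end_eq h)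
  intro f
  obtain ⟨r, hr⟩ := hsurj (F.conjAlgEquiv R f)
  exact ⟨r, (F.conjAlgEquiv R).injective (by rw [AlgEquiv.commutes, hr])⟩

end PrincipalIdealDomain

section Endomorphism

open Polynomial Module

theorem mem_centralizer_singleton {R A : Type*} [CommSemiring R] [Semiring A] [Algebra R A]
    {x y : A} : y ∈ Subalgebra.centralizer R {x} ↔ Commute x y := by
  simp [Subalgebra.mem_centralizer_iff, Commute, SemiconjBy]

/-- The centralizer of `f`, regarded as the `R[X]`-linear endomorphisms of the module on which `X`
acts as `f`. -/
noncomputable def centralizerEquivEndAEval {R V : Type*} [CommSemiring R] [AddCommMonoid V]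
    [Module R V] (f : End R V) :
    Subalgebra.centralizer R {f} ≃ₗ[R] End R[X] (AEval' f) where
  toFun g := LinearMap.ofAEval f ((AEval'.of f).toLinearMap ∘ₗ g.1) fun v ↦ by
    have h : f * g.1 = g.1 * f := mem_centralizer_singleton.mp g.2
    simpa [AEval'.X_smul_of] using (LinearMap.congr_fun h v).symm
  map_add' g h := rfl
  map_smul' c g := rfl
  invFun g := ⟨(AEval'.of f).symm.toLinearMap ∘ₗ g.restrictScalars R ∘ₗ (AEval'.of f).toLinearMap,
    by
      refine mem_centralizer_singleton.mpr (LinearMap.ext fun v ↦ ?_)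
      change f ((AEval'.of f).symm (g (AEval'.of f v))) = (AEval'.of f).symm (g (AEval'.of f (f v)))
      rw [← AEval'.of_symm_X_smul, ← map_smul, AEval'.X_smul_of]⟩
  left_inv g := rfl
  right_inv g := rfl

variable {K V : Type*} [Field K] [AddCommGroup V] [Module K V] [FiniteDimensional K V]

theorem finrank_le_finrank_centralizer (f : End K V) :
    finrank K V ≤ finrank K (Subalgebra.centralizer K {f}) := by
  rw [(AEval'.of f).finrank_eq, (centralizerEquivEndAEval f).finrank_eq]
  exact finrank_le_finrank_end_of_isTorsion (AEval.isTorsion_of_finiteDimensional K V f)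

theorem exists_aeval_eq_of_mem_centralizer {f g : End K V}
    (hf : finrank K (Subalgebra.centralizer K {f}) = finrank K V)
    (hg : g ∈ Subalgebra.centralizer K {f}) : ∃ p : K[X], aeval f p = g := by
  rw [(AEval'.of f).finrank_eq, (centralizerEquivEndAEval f).finrank_eq] at hf
  obtain ⟨p, hp⟩ := algebraMap_end_surjective_of_finrank_end_eq
    (AEval.isTorsion_of_finiteDimensional K V f) hf (centralizerEquivEndAEval f ⟨g, hg⟩)
  exact ⟨p, LinearMap.ext fun v ↦ LinearMap.congr_fun hp (AEval'.of f v)⟩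

end Endomorphism

section MatrixCentralizer

open Polynomial

section CommRing

variable {R : Type*} [CommRing R] {n : ℕ} (X : Matrix (Fin n) (Fin n) R)

variable {X} in
theorem slCent_eq_glCent_of_trace_eq_zero (h : ∀ Y ∈ glCent X, Y.trace = 0) :
    slCent X = glCent X :=
  le_antisymm (fun _ hY ↦ hY.2) fun Y hY ↦ ⟨h Y hY, hY⟩

theorem aeval_mem_glCent (p : R[X]) : aeval X p ∈ glCent X := by
  simpa using! congrArg (aeval X) (mul_comm Polynomial.X p)

theorem map_toLin'_glCent :
    (glCent X).map (Matrix.toLin' : _ ≃ₗ[R] _).toLinearMap =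
      (Subalgebra.centralizer R {Matrix.toLin' X}).toSubmodule := by
  ext g
  rw [Submodule.mem_map_equiv, Subalgebra.mem_toSubmodule, mem_centralizer_singleton]
  change Commute X (Matrix.toLinAlgEquiv'.symm g) ↔ Commute (Matrix.toLinAlgEquiv' X) g
  rw [← commute_map_iff (Matrix.toLinAlgEquiv' (R := R) (n := Fin n)).injective,
    AlgEquiv.apply_symm_apply]

/-- The centralizer of a matrix `X`, regarded as the centralizer of the endomorphism it defines. -/
def glCentEquivCentralizer :
    glCent X ≃ₗ[R] Subalgebra.centralizer R {Matrix.toLin' X} :=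
  Matrix.toLin'.ofSubmodules _ _ (map_toLin'_glCent X)

end CommRing

section Field

variable {K : Type*} [Field K] {n : ℕ} {X : Matrix (Fin n) (Fin n) K}

variable (X) in
theorem le_finrank_glCent : n ≤ Module.finrank K (glCent X) := by
  simpa [(glCentEquivCentralizer X).finrank_eq] using
    finrank_le_finrank_centralizer (Matrix.toLin' X)

theorem exists_aeval_eq_of_mem_glCent (h : Module.finrank K (glCent X) = n)
    {Y : Matrix (Fin n) (Fin n) K} (hY : Y ∈ glCent X) : ∃ p : K[X], aeval X p = Y := by
  obtain ⟨p, hp⟩ := exists_aeval_eq_of_mem_centralizer (f := Matrix.toLin' X)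
    (by rw [← (glCentEquivCentralizer X).finrank_eq, h, Module.finrank_fin_fun])
    (glCentEquivCentralizer X ⟨Y, hY⟩).2
  refine ⟨p, Matrix.toLinAlgEquiv'.injective ?_⟩
  exact (aeval_algHom_apply (Matrix.toLinAlgEquiv' (R := K)) X p).symm.trans hp

theorem finrank_slCent_add_one_of_trace_ne_zero (h : ∃ Y ∈ glCent X, Y.trace ≠ 0) :
    Module.finrank K (slCent X) + 1 = Module.finrank K (glCent X) := by
  obtain ⟨Y, hY, htrace⟩ := h
  let τ : Module.Dual K (glCent X) := (Matrix.traceLinearMap (Fin n) K K).domRestrict (glCent X)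
  have hτ : τ ≠ 0 := fun hzero ↦ htrace (LinearMap.congr_fun hzero ⟨Y, hY⟩)
  have hker : LinearMap.ker τ = (slCent X).comap (glCent X).subtype := by
    ext Z
    exact ⟨fun hZ ↦ ⟨hZ, Z.2⟩, And.left⟩
  have hle : slCent X ≤ glCent X := fun _ hZ ↦ hZ.2
  rw [← Module.Dual.finrank_ker_add_one_of_ne_zero hτ, hker,
    (Submodule.comapSubtypeEquivOfLe hle).finrank_eq]

end Field

end MatrixCentralizer

theorem slRegular_iff_glRegular_and_trace_ne_zero_general {K : Type*} [Field K] {n : ℕ}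
    (hn : 1 ≤ n) (X : Matrix (Fin n) (Fin n) K) :
    Module.finrank K (slCent X) = n - 1 ↔
      Module.finrank K (glCent X) = n ∧
        ∃ p : Polynomial K, (Polynomial.aeval X p).trace ≠ 0 := by
  have hle := le_finrank_glCent X
  constructor
  · intro hsl
    have htrace : ∃ Y ∈ glCent X, Y.trace ≠ 0 := by
      by_contra! h
      rw [slCent_eq_glCent_of_trace_eq_zero h] at hsl
      omega
    have hgl : Module.finrank K (glCent X) = n := by
      have hadd := finrank_slCent_add_one_of_trace_ne_zero htrace
      omega
    obtain ⟨Y, hY, hYtrace⟩ := htrace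
    obtain ⟨p, rfl⟩ := exists_aeval_eq_of_mem_glCent hgl hY
    exact ⟨hgl, p, hYtrace⟩
  · rintro ⟨hgl, p, hp⟩
    have hadd := finrank_slCent_add_one_of_trace_ne_zero ⟨_, aeval_mem_glCent X p, hp⟩
    omega

/-- A trace-zero matrix `X` is `sl_n(K)`-regular if and only if it is `gl_n(K)`-regular
and the trace map is nonzero on the unital subalgebra `K[X]`. -/
theorem slRegular_iff_glRegular_and_trace_ne_zero {K : Type*} [Field K] {n : ℕ} (hn : 1 ≤ n)
    (X : Matrix (Fin n) (Fin n) K) (hX : X.trace = 0) :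
    Module.finrank K (slCent X) = n - 1 ↔
      Module.finrank K (glCent X) = n ∧
        ∃ p : Polynomial K, (Polynomial.aeval X p).trace ≠ 0 :=
  slRegular_iff_glRegular_and_trace_ne_zero_general hn X
end

section
/- Let R be a local principal ideal domain with maximal ideal p, let A ∈ sl_n(R) be a trace-zero matrix, and let X ∈ sl_n(R) be a trace-zero matrix such that the reduction X mod p is sl_n(R/p)-regular. Then there exists a trace-zero matrix Y ∈ sl_n(R) with XY − YX = A if and only if tr(X^r · A) = 0 for r = 1, …, n−1. -/
open Matrix

/-!
The trace conditions say that `A` is orthogonal, for the trace form, to `1, X, …, X ^ (n - 1)`.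
Over the residue field `K`, regularity bounds the dimension of the centralizer of `X` by `n`. If two
summands in the primary decomposition of the `K[T]`-module `K ^ n` had non-coprime annihilators, a
nonzero map between them would make the centralizer larger; so the module is cyclic, the powers of
`X` are independent, and counting dimensions identifies the image of `[X, ·]` with their orthogonal
complement. Over `R` the functionals `tr (X ^ i ·)` are then jointly surjective, so their common
kernel is a direct summand of the matrix module, and Nakayama's lemma lifts the equality to `R`.
Regularity also gives some `X ^ r` a unit trace: subtracting a multiple of it makes `Y` trace-zero.
-/

open Polynomial Module

theorem isCoprime_of_forall_quotient_linearMap_eq_zero {A : Type*} [CommRing A] [IsDomain A]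
    [IsBezout A] {a b : A} (hb : b ≠ 0)
    (h : ∀ φ : (A ⧸ Ideal.span {a}) →ₗ[A] (A ⧸ Ideal.span {b}), φ = 0) : IsCoprime a b := by
  refine IsRelPrime.isCoprime fun d ⟨a', ha⟩ ⟨b', hb'⟩ => ?_
  -- If `a = d * a'` and `b = d * b'`, multiplication by `b'` descends to the quotients.
  let φ : (A ⧸ Ideal.span {a}) →ₗ[A] (A ⧸ Ideal.span {b}) :=
    Submodule.mapQ _ _ (LinearMap.mulLeft A b') <| by
      rw [Ideal.span_singleton_le_iff_mem, Submodule.mem_comap, LinearMap.mulLeft_apply,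
        Ideal.mem_span_singleton]
      exact ⟨a', by rw [ha, hb']; ring⟩
  have hφ : φ (Submodule.Quotient.mk 1) = Submodule.Quotient.mk b' := by
    simp only [φ, Submodule.mapQ_apply, LinearMap.mulLeft_apply, mul_one]
  rw [h φ, LinearMap.zero_apply, eq_comm, Submodule.Quotient.mk_eq_zero,
    Ideal.mem_span_singleton] at hφ
  obtain ⟨c, hc⟩ := hφ
  have hb'_ne : b' ≠ 0 := right_ne_zero_of_mul (hb' ▸ hb)
  refine .of_mul_eq_one c (mul_left_cancel₀ hb'_ne ?_)
  linear_combination -hc - c * hb'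

theorem linearMap_eq_zero_of_surjective_lmul_pi {A ι : Type*} {B : ι → Type*} [CommSemiring A]
    [∀ i, Semiring (B i)] [∀ i, Algebra A (B i)]
    (h : Function.Surjective (Algebra.lmul A (∀ i, B i))) {i j : ι} (hij : i ≠ j)
    (φ : B i →ₗ[A] B j) : φ = 0 := by
  classical
  obtain ⟨b, hb⟩ := h (LinearMap.single A B j ∘ₗ φ ∘ₗ LinearMap.proj i)
  ext x
  have hx := congrFun (LinearMap.congr_fun hb (Pi.single i x)) j
  simpa [Pi.single_eq_of_ne hij.symm] using hx.symm

theorem surjective_lmul_of_finrank_end_le (K : Type*) {A B : Type*} [Field K] [CommRing A]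
    [Algebra K A] [Ring B] [Algebra A B] [Algebra K B] [IsScalarTower K A B]
    [FiniteDimensional K B] (h : finrank K (End A B) ≤ finrank K B) :
    Function.Surjective (Algebra.lmul A B) := by
  let L : B →ₗ[K] End A B := (Algebra.lmul A B).toLinearMap.restrictScalars K
  have hL : Function.Injective L := Algebra.lmul_injective
  have : FiniteDimensional K (End A B) :=
    .of_injective (LinearMap.restrictScalarsₗ K A B B K) (LinearMap.restrictScalars_injective K)
  exact (LinearMap.injective_iff_surjective_of_finrank_eq_finrank
    ((LinearMap.finrank_le_finrank_of_injective hL).antisymm h)).1 hL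

theorem exists_surjective_toSpanSingleton_of_finrank_end_le (K : Type*) {A M : Type*} [Field K]
    [CommRing A] [IsDomain A] [IsPrincipalIdealRing A] [Algebra K A] [AddCommGroup M] [Module A M]
    [Module K M] [IsScalarTower K A M] [FiniteDimensional K M] (hM : IsTorsion A M)
    (h : finrank K (End A M) ≤ finrank K M) :
    ∃ v : M, Function.Surjective (LinearMap.toSpanSingleton A M v) := by
  classical
  have : Module.Finite A M := .of_restrictScalars_finite K A M
  obtain ⟨ι, _, p, hp, e, ⟨E₀⟩⟩ := equiv_directSum_of_isTorsion hM
  let I : ι → Ideal A := fun i => Ideal.span {p i ^ e i}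
  let E : M ≃ₗ[A] ∀ i, A ⧸ I i := E₀.trans (DirectSum.linearEquivFunOnFintype A ι _)
  have : FiniteDimensional K (∀ i, A ⧸ I i) := (E.restrictScalars K).finiteDimensional
  have hsurj : Function.Surjective (Algebra.lmul A (∀ i, A ⧸ I i)) := by
    refine surjective_lmul_of_finrank_end_le K ?_
    rwa [← (E.restrictScalars K).finrank_eq, ← (E.conj.restrictScalars K).finrank_eq]
  have hcoprime : Pairwise (Function.onFun IsCoprime I) := fun i j hij =>
    (Ideal.isCoprime_span_singleton_iff _ _).2 <|
      isCoprime_of_forall_quotient_linearMap_eq_zero (pow_ne_zero _ (hp j).ne_zero)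
        (linearMap_eq_zero_of_surjective_lmul_pi hsurj hij)
  refine ⟨E.symm 1, fun m => ?_⟩
  obtain ⟨r, hr⟩ := Ideal.pi_quotient_surjective hcoprime (E m)
  refine ⟨r, E.injective ?_⟩
  rw [LinearMap.toSpanSingleton_apply, map_smul, E.apply_symm_apply,
    ← Algebra.algebraMap_eq_smul_one]
  exact funext hr

theorem finrank_le_natDegree_minpoly_of_surjective_toSpanSingleton {K V : Type*} [Field K]
    [AddCommGroup V] [Module K V] [FiniteDimensional K V] (f : End K V) {v : AEval' f}
    (hv : Function.Surjective (LinearMap.toSpanSingleton K[X] (AEval' f) v)) :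
    finrank K V ≤ (minpoly K f).natDegree := by
  have hker : Ideal.span {minpoly K f} ≤ LinearMap.ker (LinearMap.toSpanSingleton K[X] _ v) := by
    rw [span_minpoly_eq_annihilator]
    exact fun p hp => mem_annihilator.1 hp v
  let q : (K[X] ⧸ Ideal.span {minpoly K f}) →ₗ[K] AEval' f :=
    (Submodule.liftQ _ _ hker).restrictScalars K
  have hq : Function.Surjective q := fun m => by
    obtain ⟨p, rfl⟩ := hv m
    exact ⟨Submodule.Quotient.mk p, rfl⟩
  have := (minpoly.monic (Algebra.IsIntegral.isIntegral (R := K) f)).finite_quotient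
  calc finrank K V = finrank K (AEval' f) := (AEval'.of f).finrank_eq
    _ ≤ finrank K (K[X] ⧸ Ideal.span {minpoly K f}) := LinearMap.finrank_le_finrank_of_surjective hq
    _ = (minpoly K f).natDegree := finrank_quotient_span_eq_natDegree

section Field

variable {K : Type*} [Field K] {n : ℕ} (Z : Matrix (Fin n) (Fin n) K)

theorem finrank_end_aeval_le_finrank_glCent :
    finrank K (End K[X] (AEval' (toLin' Z))) ≤ finrank K (glCent Z) := by
  let o := AEval'.of (toLin' Z)
  let L : End K[X] (AEval' (toLin' Z)) →ₗ[K] Matrix (Fin n) (Fin n) K :=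
    LinearMap.toMatrix'.toLinearMap ∘ₗ o.symm.conj.toLinearMap ∘ₗ
      LinearMap.restrictScalarsₗ K K[X] _ _ K
  have hL : Function.Injective L :=
    LinearMap.toMatrix'.injective.comp <|
      o.symm.conj.injective.comp (LinearMap.restrictScalars_injective K)
  have hmem : ∀ T, L T ∈ glCent Z := fun T => by
    change Z * L T = L T * Z
    refine toLin'.injective (LinearMap.ext fun v => ?_)
    have hT : T (o (toLin' Z v)) = (X : K[X]) • T (o v) := by rw [← AEval'.X_smul_of, map_smul]
    simp only [L, toLin'_mul, LinearMap.comp_apply, LinearEquiv.coe_coe, toLin'_toMatrix',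
      LinearEquiv.conj_apply_apply, LinearEquiv.symm_symm, LinearMap.restrictScalarsₗ_apply,
      LinearMap.coe_restrictScalars, hT]
    exact (AEval'.of_symm_X_smul _ _).symm
  exact LinearMap.finrank_le_finrank_of_injective (f := L.codRestrict _ hmem)
    (hL.codRestrict hmem)

variable {Z}

theorem linearIndependent_pow_of_finrank_glCent_le (h : finrank K (glCent Z) ≤ n) :
    LinearIndependent K fun i : Fin n => Z ^ (i : ℕ) := by
  obtain ⟨v, hv⟩ := exists_surjective_toSpanSingleton_of_finrank_end_le K
    (AEval.isTorsion_of_finiteDimensional K (Fin n → K) (toLin' Z)) <|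
    calc finrank K (End K[X] (AEval' (toLin' Z))) ≤ finrank K (glCent Z) :=
          finrank_end_aeval_le_finrank_glCent Z
      _ ≤ n := h
      _ = finrank K (AEval' (toLin' Z)) := by rw [← (AEval'.of _).finrank_eq, finrank_fin_fun]
  have hn := finrank_le_natDegree_minpoly_of_surjective_toSpanSingleton (toLin' Z) hv
  rw [finrank_fin_fun, minpoly_toLin'] at hn
  exact (linearIndependent_pow Z).comp (Fin.castLE hn) (Fin.castLE_injective hn)

variable (Z) in
theorem finrank_glCent_le_finrank_slCent_add_one :
    finrank K (glCent Z) ≤ finrank K (slCent Z) + 1 := by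
  let t := (traceLinearMap (Fin n) K K).domRestrict (glCent Z)
  have hker : (LinearMap.ker t).map (glCent Z).subtype = slCent Z := by
    rw [LinearMap.ker_domRestrict, Submodule.map_comap_subtype]
    exact Submodule.ext fun Y => and_comm
  have hker' : finrank K (LinearMap.ker t) = finrank K (slCent Z) := by
    rw [← hker, Submodule.finrank_map_subtype_eq]
  have hrange : finrank K (LinearMap.range t) ≤ 1 :=
    (Submodule.finrank_le _).trans_eq (finrank_self K)
  have := t.finrank_range_add_finrank_ker
  omega

end Field

theorem range_eq_ker_of_ker_le_range_sup_smul_top {R M N P : Type*} [CommRing R] [AddCommGroup M]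
    [Module R M] [AddCommGroup N] [Module R N] [Module.Finite R N] [AddCommGroup P] [Module R P]
    [Projective R P] {f : M →ₗ[R] N} {g : N →ₗ[R] P} {I : Ideal R}
    (hI : I ≤ Ideal.jacobson ⊥) (hg : Function.Surjective g)
    (hfg : LinearMap.range f ≤ LinearMap.ker g)
    (h : LinearMap.ker g ≤ LinearMap.range f ⊔ I • ⊤) :
    LinearMap.range f = LinearMap.ker g := by
  obtain ⟨s, hs⟩ := projective_lifting_property g LinearMap.id hg
  -- The projection onto `ker g` along the section `s` turns `I • ⊤` into `I • ker g`.
  let π : N →ₗ[R] N := LinearMap.id - s ∘ₗ g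
  have hπ : ∀ x ∈ LinearMap.ker g, π x = x := fun x hx => by
    simp [π, LinearMap.mem_ker.1 hx]
  have hπ_range : LinearMap.range π = LinearMap.ker g := by
    refine le_antisymm ?_ fun x hx => ⟨x, hπ x hx⟩
    rintro _ ⟨x, rfl⟩
    have hgs : g (s (g x)) = g x := LinearMap.congr_fun hs (g x)
    simp [π, hgs]
  have hker_fg : (LinearMap.ker g).FG := hπ_range ▸ Submodule.fg_range π
  have hπ_map : ∀ p ≤ LinearMap.ker g, p.map π = p := fun p hp => by
    ext x
    exact ⟨fun ⟨y, hy, hyx⟩ => hyx ▸ (hπ y (hp hy)).symm ▸ hy, fun hx => ⟨x, hx, hπ x (hp hx)⟩⟩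
  refine hfg.antisymm (Submodule.le_of_le_smul_of_le_jacobson_bot hker_fg hI ?_)
  calc LinearMap.ker g = (LinearMap.ker g).map π := (hπ_map _ le_rfl).symm
    _ ≤ (LinearMap.range f ⊔ I • ⊤).map π := Submodule.map_mono h
    _ = LinearMap.range f ⊔ I • LinearMap.ker g := by
      rw [Submodule.map_sup, hπ_map _ hfg, Submodule.map_smul'', Submodule.map_top, hπ_range]

theorem mem_smul_top_of_forall_repr_mem {R M ι : Type*} [CommSemiring R] [AddCommMonoid M]
    [Module R M] (b : Basis ι R M) {I : Ideal R} {x : M} (h : ∀ i, b.repr x i ∈ I) :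
    x ∈ I • (⊤ : Submodule R M) := by
  rw [← b.linearCombination_repr x]
  exact sum_mem fun i _ => Submodule.smul_mem_smul (h i) trivial

section CommRing

/-- The commutator map `y ↦ ⁅x, y⁆` of an associative algebra. It is defined for the ring bracket
directly, since `LieAlgebra.ad` would need the non-global Lie ring structure on `A`. -/
def commutatorMap (R : Type*) {A : Type*} [CommRing R] [Ring A] [Algebra R A] (x : A) :
    A →ₗ[R] A :=
  LinearMap.mulLeft R x - LinearMap.mulRight R x

theorem commutatorMap_apply {R A : Type*} [CommRing R] [Ring A] [Algebra R A] (x y : A) :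
    commutatorMap R x y = x * y - y * x := rfl

variable {R m ι : Type*} [CommRing R] [Fintype m] [DecidableEq m]

theorem trace_mul_commutatorMap_of_commute {C X : Matrix m m R} (h : Commute C X)
    (Y : Matrix m m R) : (C * commutatorMap R X Y).trace = 0 := by
  rw [commutatorMap_apply, mul_sub, ← mul_assoc, h.eq, mul_assoc, ← mul_assoc C, trace_sub,
    trace_mul_comm, sub_self]

theorem exists_trace_eq_zero_and_commutatorMap_eq {C X : Matrix m m R}
    (h : Commute X C) (hC : IsUnit C.trace) (Y : Matrix m m R) :
    ∃ Y' : Matrix m m R, Y'.trace = 0 ∧ commutatorMap R X Y' = commutatorMap R X Y := by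
  obtain ⟨u, hu⟩ := hC
  have hXC : commutatorMap R X C = 0 := sub_eq_zero.2 h.eq
  refine ⟨Y - (Y.trace * ↑u⁻¹) • C, ?_, ?_⟩
  · rw [trace_sub, trace_smul, ← hu, smul_eq_mul, u.inv_mul_cancel_right, sub_self]
  · rw [map_sub, map_smul, hXC, smul_zero, sub_zero]

/-- The family of functionals `A ↦ tr (B i * A)` attached to a family of matrices `B`, bundled as
one linear map. For `B i = X ^ i` its vanishing is the trace criterion. -/
def tracePairing (B : ι → Matrix m m R) : Matrix m m R →ₗ[R] (ι → R) :=
  LinearMap.pi fun i => traceLinearMap m R R ∘ₗ LinearMap.mulLeft R (B i)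

theorem tracePairing_apply (B : ι → Matrix m m R) (A : Matrix m m R) (i : ι) :
    tracePairing B A i = (B i * A).trace := rfl

theorem tracePairing_map {S : Type*} [CommRing S] (φ : R →+* S) (B : ι → Matrix m m R)
    (A : Matrix m m R) (i : ι) :
    tracePairing (fun i => (B i).map φ) (A.map φ) i = φ (tracePairing B A i) := by
  rw [tracePairing_apply, tracePairing_apply, ← Matrix.map_mul, AddMonoidHom.map_trace φ]

theorem range_commutatorMap_le_ker_tracePairing_pow (X : Matrix m m R) (k : ℕ) :
    LinearMap.range (commutatorMap R X) ≤
      LinearMap.ker (tracePairing fun i : Fin k => X ^ (i : ℕ)) := by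
  rintro _ ⟨Y, rfl⟩
  exact funext fun i => trace_mul_commutatorMap_of_commute (Commute.pow_self X i) Y

end CommRing

theorem ker_commutatorMap_eq_glCent {R : Type*} [CommRing R] {n : ℕ}
    (X : Matrix (Fin n) (Fin n) R) :
    LinearMap.ker (commutatorMap R X) = glCent X :=
  Submodule.ext fun _ => sub_eq_zero

theorem tracePairing_surjective {K m ι : Type*} [Field K] [Fintype m] [DecidableEq m] [Finite ι]
    {B : ι → Matrix m m K} (hB : LinearIndependent K B) :
    Function.Surjective (tracePairing B) := by
  classical
  cases nonempty_fintype ι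
  rw [← LinearMap.dualMap_injective_iff, injective_iff_map_eq_zero]
  intro f hf
  have hpair : ∀ A, ∑ i, (B i * A).trace * f (Pi.single i 1) = 0 := fun A => by
    have hfA := LinearMap.congr_fun hf A
    rw [LinearMap.dualMap_apply, pi_eq_sum_univ' (tracePairing B A), map_sum] at hfA
    simpa only [map_smul, smul_eq_mul, tracePairing_apply, LinearMap.zero_apply] using hfA
  have hsum : ∑ i, f (Pi.single i 1) • B i = 0 :=
    ext_iff_trace_mul_right.2 fun A => by
      simpa [Finset.sum_mul, trace_sum, mul_comm] using hpair A
  refine LinearMap.pi_ext' fun i => LinearMap.ext_ring ?_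
  exact Fintype.linearIndependent_iff.1 hB _ hsum i

section Field

variable {K : Type*} [Field K] {n : ℕ} {Z : Matrix (Fin n) (Fin n) K}

theorem range_commutatorMap_eq_ker_tracePairing_pow (h : finrank K (glCent Z) ≤ n) :
    LinearMap.range (commutatorMap K Z) =
      LinearMap.ker (tracePairing fun i : Fin n => Z ^ (i : ℕ)) := by
  refine Submodule.eq_of_le_of_finrank_le (range_commutatorMap_le_ker_tracePairing_pow Z n) ?_
  have hcomm := (commutatorMap K Z).finrank_range_add_finrank_ker
  have htr := (tracePairing fun i : Fin n => Z ^ (i : ℕ)).finrank_range_add_finrank_ker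
  rw [ker_commutatorMap_eq_glCent] at hcomm
  rw [LinearMap.range_eq_top.2
    (tracePairing_surjective (linearIndependent_pow_of_finrank_glCent_le h)),
    finrank_top, finrank_fin_fun] at htr
  omega

theorem exists_trace_pow_ne_zero_of_finrank_slCent_lt (h : finrank K (slCent Z) < n) :
    ∃ r : ℕ, (Z ^ r).trace ≠ 0 := by
  by_contra! hz
  have hli := linearIndependent_pow_of_finrank_glCent_le
    ((finrank_glCent_le_finrank_slCent_add_one Z).trans h)
  have hmem : ∀ i : Fin n, Z ^ (i : ℕ) ∈ slCent Z := fun i => ⟨hz i, (Commute.self_pow Z i).eq⟩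
  have hli' : LinearIndependent K fun i : Fin n => (⟨Z ^ (i : ℕ), hmem i⟩ : slCent Z) :=
    .of_comp (slCent Z).subtype hli
  have hcard := hli'.fintype_card_le_finrank
  rw [Fintype.card_fin] at hcard
  omega

end Field

section LocalRing

open IsLocalRing

variable {R : Type*} [CommRing R] [IsLocalRing R]

theorem exists_map_residue_eq {m n : Type*} (A : Matrix m n (ResidueField R)) :
    ∃ B : Matrix m n R, B.map (residue R) = A :=
  ⟨A.map (Function.surjInv residue_surjective),
    Matrix.ext fun _ _ => Function.surjInv_eq residue_surjective _⟩

theorem mem_maximalIdeal_smul_top_of_map_residue_eq_zero {m n : Type*} [Finite m] [Finite n]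
    {A : Matrix m n R} (hA : A.map (residue R) = 0) :
    A ∈ maximalIdeal R • (⊤ : Submodule R (Matrix m n R)) := by
  cases nonempty_fintype m
  exact mem_smul_top_of_forall_repr_mem (stdBasis R m n) fun ij =>
    (residue_eq_zero_iff _).1 (congrFun₂ hA ij.1 ij.2)

theorem tracePairing_surjective_of_residue {m ι : Type*} [Fintype m] [DecidableEq m] [Finite ι]
    {B : ι → Matrix m m R}
    (h : Function.Surjective (tracePairing fun i => (B i).map (residue R))) :
    Function.Surjective (tracePairing B) := by
  rw [← LinearMap.range_eq_top, ← top_le_iff]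
  refine Submodule.le_of_le_smul_of_le_jacobson_bot Module.Finite.fg_top
    (maximalIdeal_le_jacobson ⊥) fun w _ => ?_
  obtain ⟨A', hA'⟩ := h fun i => residue R (w i)
  obtain ⟨A, rfl⟩ := exists_map_residue_eq A'
  have hdiff : w - tracePairing B A ∈ maximalIdeal R • (⊤ : Submodule R (ι → R)) :=
    mem_smul_top_of_forall_repr_mem (Pi.basisFun R ι) fun i => by
      rw [Pi.basisFun_repr, ← residue_eq_zero_iff, Pi.sub_apply, map_sub, ← tracePairing_map, hA',
        sub_self]
  exact Submodule.mem_sup.2 ⟨_, ⟨A, rfl⟩, _, hdiff, add_sub_cancel _ _⟩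

theorem range_commutatorMap_eq_ker_tracePairing_pow_of_residue {n : ℕ}
    {X : Matrix (Fin n) (Fin n) R}
    (h : finrank (ResidueField R) (glCent (X.map (residue R))) ≤ n) :
    LinearMap.range (commutatorMap R X) =
      LinearMap.ker (tracePairing fun i : Fin n => X ^ (i : ℕ)) := by
  have hmap_pow : (fun i : Fin n => (X ^ (i : ℕ)).map (residue R)) =
      fun i : Fin n => X.map (residue R) ^ (i : ℕ) := funext fun i => Matrix.map_pow X _ i
  have hsurj : Function.Surjective (tracePairing fun i : Fin n => X ^ (i : ℕ)) :=
    tracePairing_surjective_of_residue <| by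
      rw [hmap_pow]
      exact tracePairing_surjective (linearIndependent_pow_of_finrank_glCent_le h)
  refine range_eq_ker_of_ker_le_range_sup_smul_top (maximalIdeal_le_jacobson ⊥) hsurj
    (range_commutatorMap_le_ker_tracePairing_pow X n) fun A hA => ?_
  have hA_residue : A.map (residue R) ∈
      LinearMap.range (commutatorMap (ResidueField R) (X.map (residue R))) := by
    rw [range_commutatorMap_eq_ker_tracePairing_pow h, ← hmap_pow]
    refine funext fun i => ?_
    rw [tracePairing_map, LinearMap.mem_ker.1 hA, Pi.zero_apply, map_zero, Pi.zero_apply]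
  obtain ⟨Y', hY'⟩ := hA_residue
  obtain ⟨Y, rfl⟩ := exists_map_residue_eq Y'
  have hdiff : (A - commutatorMap R X Y).map (residue R) = 0 := by
    rw [Matrix.map_sub _ (map_sub _), ← hY', commutatorMap_apply, commutatorMap_apply,
      Matrix.map_sub _ (map_sub _), Matrix.map_mul, Matrix.map_mul, sub_self]
  exact Submodule.mem_sup.2 ⟨_, ⟨Y, rfl⟩, _,
    mem_maximalIdeal_smul_top_of_map_residue_eq_zero hdiff, add_sub_cancel _ _⟩

theorem exists_isUnit_trace_pow {n : ℕ} {X : Matrix (Fin n) (Fin n) R}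
    (h : finrank (ResidueField R) (slCent (X.map (residue R))) < n) :
    ∃ r : ℕ, IsUnit (X ^ r).trace := by
  obtain ⟨r, hr⟩ := exists_trace_pow_ne_zero_of_finrank_slCent_lt h
  rw [← Matrix.map_pow, ← AddMonoidHom.map_trace (residue R)] at hr
  exact ⟨r, (residue_ne_zero_iff_isUnit _).1 hr⟩

end LocalRing

theorem commutator_criterion_local_PID_general {R : Type*} [CommRing R] [IsLocalRing R] {n : ℕ}
    (A : Matrix (Fin n) (Fin n) R) (hA : A.trace = 0) (X : Matrix (Fin n) (Fin n) R)
    (hreg : finrank (IsLocalRing.ResidueField R)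
      (slCent (X.map (IsLocalRing.residue R))) = n - 1) :
    (∃ Y : Matrix (Fin n) (Fin n) R, Y.trace = 0 ∧ X * Y - Y * X = A) ↔
      ∀ r : ℕ, 1 ≤ r → r ≤ n - 1 → (X ^ r * A).trace = 0 := by
  constructor
  · rintro ⟨Y, -, rfl⟩ r - -
    exact trace_mul_commutatorMap_of_commute (Commute.pow_self X r) Y
  intro h
  obtain rfl | hn := Nat.eq_zero_or_pos n
  · exact ⟨0, trace_zero _ _, Subsingleton.elim _ _⟩
  have hlt : finrank (IsLocalRing.ResidueField R) (slCent (X.map (IsLocalRing.residue R))) < n :=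
    hreg.trans_lt (Nat.sub_one_lt_of_lt hn)
  have hA_ker : A ∈ LinearMap.ker (tracePairing fun i : Fin n => X ^ (i : ℕ)) := funext fun i => by
    obtain hi | hi := Nat.eq_zero_or_pos (i : ℕ)
    · simpa [tracePairing_apply, hi] using hA
    · exact h i hi (Nat.le_sub_one_of_lt i.isLt)
  rw [← range_commutatorMap_eq_ker_tracePairing_pow_of_residue
    ((finrank_glCent_le_finrank_slCent_add_one _).trans hlt)] at hA_ker
  obtain ⟨Y, rfl⟩ := hA_ker
  obtain ⟨r, hr⟩ := exists_isUnit_trace_pow hlt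
  exact exists_trace_eq_zero_and_commutatorMap_eq (Commute.self_pow X r) hr Y

/-- Local Laffey–Reams criterion: over a local PID `R`, if `X mod p` is `sl_n(R/p)`-regular,
then `A = [X, Y]` for some trace-zero `Y` iff `tr(X^r A) = 0` for `r = 1, …, n-1`. -/
theorem commutator_criterion_local_PID {R : Type*} [CommRing R] [IsDomain R]
    [IsPrincipalIdealRing R] [IsLocalRing R] {n : ℕ}
    (A : Matrix (Fin n) (Fin n) R) (hA : A.trace = 0)
    (X : Matrix (Fin n) (Fin n) R) (hX : X.trace = 0)
    (hreg : Module.finrank (IsLocalRing.ResidueField R)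
      (slCent (X.map (IsLocalRing.residue R))) = n - 1) :
    (∃ Y : Matrix (Fin n) (Fin n) R, Y.trace = 0 ∧ X * Y - Y * X = A) ↔
      ∀ r : ℕ, 1 ≤ r → r ≤ n - 1 → (X ^ r * A).trace = 0 :=
  commutator_criterion_local_PID_general A hA X hreg
end

section
/- Let S be a commutative ring with identity, n ≥ 3, x = (x_1, …, x_{n−1})ᵀ ∈ S^{n−1}, and a ∈ S. Let X(x,a) ∈ M_n(S) be the trace-zero matrix with entries m_{i,i+1} = 1 for i = 2, …, n−1, m_{i,1} = x_{i−1} for i = 2, …, n, m_{n,2} = a, and all other entries zero. Then tr(X(x,a)^r) = 0 for r = 1, …, n−2, and tr(X(x,a)^{n−1}) = (n−1)·a. -/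
open Matrix

/-!
Deleting the first row, which is zero, and the first column of `X(x,a)` leaves the traces of its
positive powers unchanged, because the span of the remaining coordinates is invariant. What is left
is a weighted permutation matrix of a cycle of length `m = n - 1` whose weights have product `a`.
Its `r`-th power is supported on the graph of the `r`-th power of the cycle, which has no fixed
points unless `m ∣ r`, and its `m`-th power is the scalar `a`, since going once around the cycle
from any starting point collects every weight exactly once.
-/

section Submatrix

variable {ι κ S : Type*} [Fintype ι] [DecidableEq ι] [Semiring S]

theorem pow_row_eq_zero {M : Matrix ι ι S} {i : ι} (hi : M i = 0) {r : ℕ} (hr : r ≠ 0) :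
    (M ^ r) i = 0 := by
  obtain ⟨k, rfl⟩ := Nat.exists_eq_succ_of_ne_zero hr
  rw [pow_succ', mul_apply_eq_vecMul, hi, zero_vecMul]

theorem submatrix_pow_of_forall_notMem_range [Fintype κ] [DecidableEq κ] {M : Matrix ι ι S}
    {f : κ → ι} (hf : Function.Injective f) (hM : ∀ i ∉ Set.range f, ∀ j, M i (f j) = 0) (r : ℕ) :
    (M ^ r).submatrix f f = M.submatrix f f ^ r := by
  induction r with
  | zero => rw [pow_zero, pow_zero, submatrix_one f hf]
  | succ r ih =>
    rw [pow_succ, pow_succ, ← ih]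
    ext i j
    simp only [submatrix_apply, mul_apply]
    refine (Fintype.sum_of_injective f hf _ _ (fun k hk => ?_) fun _ => rfl).symm
    rw [hM k hk j, mul_zero]

theorem trace_pow_eq_trace_submatrix_succ_pow {m : ℕ} {M : Matrix (Fin (m + 1)) (Fin (m + 1)) S}
    (hM : M 0 = 0) {r : ℕ} (hr : r ≠ 0) :
    (M ^ r).trace = (M.submatrix Fin.succ Fin.succ ^ r).trace := by
  have hcol : ∀ i ∉ Set.range Fin.succ, ∀ j : Fin m, M i j.succ = 0 := by
    intro i hi j
    obtain rfl : i = 0 := by simpa using hi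
    exact congrFun hM j.succ
  rw [← submatrix_pow_of_forall_notMem_range (Fin.succ_injective m) hcol,
    ← trace_submatrix_succ, pow_row_eq_zero hM hr, Pi.zero_apply, zero_add]

end Submatrix

section WeightedPermMatrix

variable {ι S : Type*} [DecidableEq ι]

/-- The weighted permutation matrix (generalized permutation matrix) of `σ` with weights `w`. As
for `Equiv.Perm.permMatrix`, the nonzero entry of row `i`, here `w i`, stands in column `σ i`. -/
def weightedPermMatrix [Zero S] (w : ι → S) (σ : Equiv.Perm ι) : Matrix ι ι S :=
  of fun i j => if σ i = j then w i else 0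

theorem weightedPermMatrix_apply [Zero S] (w : ι → S) (σ : Equiv.Perm ι) (i j : ι) :
    weightedPermMatrix w σ i j = if σ i = j then w i else 0 :=
  rfl

theorem weightedPermMatrix_one [Zero S] (w : ι → S) :
    weightedPermMatrix w 1 = diagonal w :=
  rfl

theorem weightedPermMatrix_mul [Fintype ι] [NonUnitalNonAssocSemiring S] (v w : ι → S)
    (σ τ : Equiv.Perm ι) :
    weightedPermMatrix v σ * weightedPermMatrix w τ =
      weightedPermMatrix (fun i => v i * w (σ i)) (τ * σ) := by
  ext i j
  simp only [mul_apply, weightedPermMatrix_apply, ite_mul, zero_mul, Fintype.sum_ite_eq]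
  exact mul_ite_zero _ _ _

theorem trace_weightedPermMatrix_of_forall_apply_ne [Fintype ι] [AddCommMonoid S] (w : ι → S)
    {σ : Equiv.Perm ι} (hσ : ∀ i, σ i ≠ i) : (weightedPermMatrix w σ).trace = 0 :=
  Finset.sum_eq_zero fun i _ => if_neg (hσ i)

theorem weightedPermMatrix_pow [Fintype ι] [CommSemiring S] (w : ι → S) (σ : Equiv.Perm ι)
    (r : ℕ) :
    weightedPermMatrix w σ ^ r =
      weightedPermMatrix (fun i => ∏ k ∈ Finset.range r, w ((σ ^ k) i)) (σ ^ r) := by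
  induction r with
  | zero => simp [weightedPermMatrix_one]
  | succ r ih =>
    simp only [pow_succ (weightedPermMatrix w σ), ih, weightedPermMatrix_mul, ← pow_succ',
      Finset.prod_range_succ]

end WeightedPermMatrix

section Cycle

theorem isCycleOn_finRotate (m : ℕ) :
    (finRotate m).IsCycleOn (Finset.univ : Finset (Fin m)) := by
  rcases Nat.lt_or_ge m 2 with hm | hm
  · have : Subsingleton (Fin m) := Fin.subsingleton_iff_le_one.2 (by omega)
    exact Equiv.Perm.isCycleOn_of_subsingleton _ _
  · have h := (isCycle_finRotate_of_le hm).isCycleOn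
    rwa [← Equiv.Perm.coe_support_eq_set_support, support_finRotate_of_le hm] at h

theorem prod_range_card_pow_apply {ι M : Type*} [CommMonoid M] {σ : Equiv.Perm ι} {s : Finset ι}
    (hσ : σ.IsCycleOn s) {i : ι} (hi : i ∈ s) (w : ι → M) :
    ∏ k ∈ Finset.range s.card, w ((σ ^ k) i) = ∏ j ∈ s, w j := by
  refine Finset.prod_nbij (fun k => (σ ^ k) i) ?_ ?_ ?_ fun _ _ => rfl
  · exact fun k _ => hσ.1.mapsTo.perm_pow k hi
  · intro k hk l hl hkl
    exact ((hσ.pow_apply_eq_pow_apply hi).1 hkl).eq_of_lt_of_lt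
      (Finset.mem_range.1 hk) (Finset.mem_range.1 hl)
  · intro j hj
    obtain ⟨k, hk, rfl⟩ := hσ.exists_pow_eq hi hj
    exact ⟨k, Finset.mem_coe.2 (Finset.mem_range.2 hk), rfl⟩

variable {ι S : Type*} [Fintype ι] [DecidableEq ι] [CommSemiring S] {σ : Equiv.Perm ι}

theorem trace_weightedPermMatrix_pow_of_not_dvd (hσ : σ.IsCycleOn (Finset.univ : Finset ι))
    (w : ι → S) {r : ℕ} (hr : ¬ Fintype.card ι ∣ r) : (weightedPermMatrix w σ ^ r).trace = 0 := by
  rw [weightedPermMatrix_pow]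
  exact trace_weightedPermMatrix_of_forall_apply_ne _ fun i hi =>
    hr ((hσ.pow_apply_eq (Finset.mem_univ i)).1 hi)

theorem weightedPermMatrix_pow_card (hσ : σ.IsCycleOn (Finset.univ : Finset ι)) (w : ι → S) :
    weightedPermMatrix w σ ^ Fintype.card ι = scalar ι (∏ i, w i) := by
  have hpow : σ ^ Fintype.card ι = 1 :=
    Equiv.ext fun i => hσ.pow_card_apply (Finset.mem_univ i)
  rw [weightedPermMatrix_pow, hpow, weightedPermMatrix_one, scalar_apply]
  exact congrArg diagonal (funext fun i => prod_range_card_pow_apply hσ (Finset.mem_univ i) w)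

theorem trace_weightedPermMatrix_pow_card_mul (hσ : σ.IsCycleOn (Finset.univ : Finset ι))
    (w : ι → S) (q : ℕ) :
    (weightedPermMatrix w σ ^ (Fintype.card ι * q)).trace =
      Fintype.card ι * (∏ i, w i) ^ q := by
  rw [pow_mul, weightedPermMatrix_pow_card hσ, ← map_pow, scalar_apply, trace_diagonal,
    Finset.sum_const, Finset.card_univ, nsmul_eq_mul]

end Cycle

theorem trace_pow_Xxa_general {S : Type*} [CommSemiring S] {n : ℕ} (hn : 2 ≤ n)
    (x : Fin (n - 1) → S) (a : S) (X : Matrix (Fin n) (Fin n) S)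
    (hX : ∀ i j : Fin n, X i j =
      if 1 ≤ (i : ℕ) ∧ (i : ℕ) ≤ n - 2 ∧ (j : ℕ) = (i : ℕ) + 1 then 1
      else if (j : ℕ) = 0 ∧ 1 ≤ (i : ℕ) then x ⟨(i : ℕ) - 1, by have := i.isLt; omega⟩
      else if (i : ℕ) = n - 1 ∧ (j : ℕ) = 1 then a
      else 0) :
    (∀ r : ℕ, ¬ n - 1 ∣ r → (X ^ r).trace = 0) ∧
      ∀ q : ℕ, q ≠ 0 → (X ^ ((n - 1) * q)).trace = ((n - 1 : ℕ) : S) * a ^ q := by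
  obtain ⟨m, rfl⟩ := Nat.exists_eq_add_of_le' hn
  have hrow : X 0 = 0 := funext fun j => by simp [hX]
  have hsub : X.submatrix Fin.succ Fin.succ =
      weightedPermMatrix (Pi.mulSingle (Fin.last m) a) (finRotate (m + 1)) := by
    ext i j
    simp only [submatrix_apply, hX, weightedPermMatrix_apply, Pi.mulSingle_apply, Fin.ext_iff,
      coe_finRotate, Fin.val_last, Fin.val_succ, Nat.add_one_ne_zero, false_and, if_false]
    split_ifs <;> first | rfl | omega
  have hσ := isCycleOn_finRotate (m + 1)
  refine ⟨fun r hr => ?_, fun q hq => ?_⟩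
  · have hr0 : r ≠ 0 := fun h => hr (h ▸ dvd_zero _)
    rw [trace_pow_eq_trace_submatrix_succ_pow hrow hr0, hsub]
    exact trace_weightedPermMatrix_pow_of_not_dvd hσ _ (by simpa using hr)
  · rw [trace_pow_eq_trace_submatrix_succ_pow hrow (Nat.mul_ne_zero (by omega) hq), hsub]
    simpa using trace_weightedPermMatrix_pow_card_mul hσ (Pi.mulSingle (Fin.last m) a) q

/-- Traces of powers of the matrix `X(x,a)`: `tr(X(x,a)^r) = 0` for `r = 1, …, n-2` and
`tr(X(x,a)^{n-1}) = (n-1)·a`. Indices are `0`-based: entry `(i, i+1)` equals `1` for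
`1 ≤ i ≤ n-2`, entry `(i, 0)` equals `x_{i-1}` for `1 ≤ i`, entry `(n-1, 1)` equals `a`. -/
theorem trace_pow_Xxa {S : Type*} [CommRing S] {n : ℕ} (hn : 3 ≤ n)
    (x : Fin (n - 1) → S) (a : S) (X : Matrix (Fin n) (Fin n) S)
    (hX : ∀ i j : Fin n, X i j =
      if 1 ≤ (i : ℕ) ∧ (i : ℕ) ≤ n - 2 ∧ (j : ℕ) = (i : ℕ) + 1 then 1
      else if (j : ℕ) = 0 ∧ 1 ≤ (i : ℕ) then x ⟨(i : ℕ) - 1, by have := i.isLt; omega⟩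
      else if (i : ℕ) = n - 1 ∧ (j : ℕ) = 1 then a
      else 0) :
    (∀ r : ℕ, 1 ≤ r → r ≤ n - 2 → (X ^ r).trace = 0) ∧
      (X ^ (n - 1)).trace = ((n - 1 : ℕ) : S) * a := by
  obtain ⟨hzero, hmul⟩ := trace_pow_Xxa_general (by omega) x a X hX
  exact ⟨fun r _ _ => hzero r (Nat.not_dvd_of_pos_of_lt (by omega) (by omega)),
    by simpa using hmul 1 one_ne_zero⟩
end

section
/- Let K be a field, n ≥ 3, x = (x_1, …, x_{n−1})ᵀ ∈ K^{n−1}, and a ∈ K, and let X(x,a) ∈ M_n(K) be the matrix with entries m_{i,i+1} = 1 for i = 2, …, n−1, m_{i,1} = x_{i−1} for i = 2, …, n, m_{n,2} = a, and all other entries zero. If x_{n−1} ≠ 0 or a ≠ 0, then X(x,a) is gl_n(K)-regular. Moreover, if a ≠ 0, then X(x,a) is sl_n(K)-regular. -/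
open Matrix

/-!
Index rows from `0`, let `e₀, e₁, …` be the standard row vectors and `X = X(x,a)`. Row `0` of `X` is
zero, so `X` kills `e₀`; modulo `e₀`, the other `eᵢ` are shifted by `X` to `eᵢ₊₁`, and the last one
to `a e₁`. Hence row `1` of `Xᵏ` is row `k` of `X`, and `v = e₁ + c e₀` satisfies
`v Xⁿ⁻¹ - a v = (xₙ₋₁ - a c) e₀`. If `c` makes this coefficient nonzero, then the vectors `v p(X)`
contain a nonzero multiple of every `eᵢ`, so `Y ↦ v Y` embeds the centralizer of `X` into the row
vectors with an image of full rank `n`.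

Modulo `e₀`, the matrix `Xⁿ⁻¹` acts as the scalar `a`. Therefore `a - Xⁿ⁻¹`, which commutes with
`X`, has trace `a` in every characteristic, and the trace is a nonzero functional on the centralizer
as soon as `a ≠ 0`.
-/

section Krylov

variable {R ι : Type*} [CommSemiring R] [Fintype ι] [DecidableEq ι]

/-- The Krylov submodule of a row vector `v`: the span of the vectors `v Xᵏ`, encoded as the set of
all `v p(X)` with `p` a polynomial. When it is everything, `v` is a cyclic row vector of `X`. -/
noncomputable def rowKrylov (X : Matrix ι ι R) (v : ι → R) : Submodule R (ι → R) :=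
  LinearMap.range (vecMulBilin R R v ∘ₗ (Polynomial.aeval X).toLinearMap)

variable {X : Matrix ι ι R} {v w : ι → R}

theorem mem_rowKrylov : w ∈ rowKrylov X v ↔ ∃ p : Polynomial R, v ᵥ* Polynomial.aeval X p = w :=
  Iff.rfl

theorem vecMul_pow_mem_rowKrylov (X : Matrix ι ι R) (v : ι → R) (k : ℕ) :
    v ᵥ* X ^ k ∈ rowKrylov X v :=
  mem_rowKrylov.2 ⟨Polynomial.X ^ k, by simp⟩

theorem self_mem_rowKrylov (X : Matrix ι ι R) (v : ι → R) : v ∈ rowKrylov X v := by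
  simpa using vecMul_pow_mem_rowKrylov X v 0

theorem vecMul_mem_rowKrylov (hw : w ∈ rowKrylov X v) : w ᵥ* X ∈ rowKrylov X v := by
  obtain ⟨p, rfl⟩ := mem_rowKrylov.1 hw
  exact mem_rowKrylov.2 ⟨p * Polynomial.X, by simp⟩

end Krylov

theorem rank_range_eq_one_of_ne_zero {R M : Type*} [CommRing R] [IsDomain R] [AddCommGroup M]
    [Module R M] {f : M →ₗ[R] R} (hf : f ≠ 0) : Module.rank R (LinearMap.range f) = 1 := by
  have : Nontrivial (LinearMap.range f) :=
    Submodule.nontrivial_iff_ne_bot.2 (mt LinearMap.range_eq_bot.1 hf)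
  apply le_antisymm
  · simpa using Submodule.rank_le (LinearMap.range f)
  · exact Cardinal.one_le_iff_pos.2 rank_pos

section Centralizer

variable {R : Type*} [CommRing R] {n : ℕ} {X Y : Matrix (Fin n) (Fin n) R}

theorem commute_aeval_of_mem_glCent (hY : Y ∈ glCent X) (p : Polynomial R) :
    Commute (Polynomial.aeval X p) Y :=
  (Algebra.commute_of_mem_adjoin_singleton_of_commute
    (Polynomial.aeval_mem_adjoin_singleton R X) (Commute.symm hY)).symm

theorem aeval_mem_glCent_s8 (X : Matrix (Fin n) (Fin n) R) (p : Polynomial R) :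
    Polynomial.aeval X p ∈ glCent X :=
  (commute_aeval_of_mem_glCent (show X ∈ glCent X from rfl) p).symm.eq

variable {v : Fin n → R} {d : R}

theorem eq_zero_of_mem_glCent_of_vecMul_eq_zero [NoZeroDivisors R] (hd : d ≠ 0)
    (hv : ∀ i, Pi.single i d ∈ rowKrylov X v) (hY : Y ∈ glCent X) (h : v ᵥ* Y = 0) :
    Y = 0 := by
  ext i j
  obtain ⟨p, hp⟩ := mem_rowKrylov.1 (hv i)
  have hrow : Pi.single i d ᵥ* Y = 0 := by
    rw [← hp, vecMul_vecMul, (commute_aeval_of_mem_glCent hY p).eq, ← vecMul_vecMul, h,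
      zero_vecMul]
  simpa [hd] using congrFun hrow j

variable [IsDomain R]

theorem rank_glCent_of_single_mem_rowKrylov (hd : d ≠ 0)
    (hv : ∀ i, Pi.single i d ∈ rowKrylov X v) : Module.rank R (glCent X) = n := by
  let φ : glCent X →ₗ[R] (Fin n → R) := vecMulBilin R R v ∘ₗ (glCent X).subtype
  have hφ : Function.Injective φ := (injective_iff_map_eq_zero φ).2 fun Y hY =>
    Subtype.ext (eq_zero_of_mem_glCent_of_vecMul_eq_zero hd hv Y.2 hY)
  choose p hp using fun i => mem_rowKrylov.1 (hv i)
  have hindep : LinearIndependent R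
      fun i => (⟨Polynomial.aeval X (p i), aeval_mem_glCent_s8 X (p i)⟩ : glCent X) := by
    refine LinearIndependent.of_comp φ ?_
    simpa [Function.comp_def, φ, hp] using
      Pi.linearIndependent_single_of_ne_zero (R := R) fun _ : Fin n => hd
  apply le_antisymm
  · simpa using φ.rank_le_of_injective hφ
  · simpa using hindep.cardinal_lift_le_rank

theorem rank_slCent_add_one (hY : Y ∈ glCent X) (htr : Y.trace ≠ 0) :
    Module.rank R (slCent X) + 1 = Module.rank R (glCent X) := by
  let τ : glCent X →ₗ[R] R := traceLinearMap (Fin n) R R ∘ₗ (glCent X).subtype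
  have hτ : τ ≠ 0 := fun h => htr (LinearMap.congr_fun h ⟨Y, hY⟩)
  have hker : (LinearMap.ker τ).map (glCent X).subtype = slCent X := by
    ext Z
    constructor
    · rintro ⟨W, hW, rfl⟩
      exact ⟨hW, W.2⟩
    · rintro ⟨htrZ, hZ⟩
      exact ⟨⟨Z, hZ⟩, htrZ, rfl⟩
  have hrank := LinearMap.lift_rank_range_add_rank_ker τ
  rw [rank_range_eq_one_of_ne_zero hτ] at hrank
  rw [← hker, ← ((LinearMap.ker τ).equivMapOfInjective _ (glCent X).injective_subtype).rank_eq,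
    add_comm]
  simpa using hrank

end Centralizer

section MatrixXxa

variable {R : Type*} [CommRing R] {m : ℕ}

/-- The matrix `X(x,a)` of size `n = m + 2`, given by its rows: the zero row, then the rows
`eᵢ₊₂ + xᵢ e₀` for `0 ≤ i < m`, and last the row `xₘ e₀ + a e₁`. The entries of `x` are indexed from
`0`, so `x (Fin.last m)` is the paper's `xₙ₋₁`. -/
def matrixXxa (x : Fin (m + 1) → R) (a : R) : Matrix (Fin (m + 2)) (Fin (m + 2)) R :=
  Matrix.of (Fin.cons 0 (Fin.snoc
    (fun i : Fin m => Pi.single i.succ.succ 1 + Pi.single 0 (x i.castSucc))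
    (Pi.single 0 (x (Fin.last m)) + Pi.single 1 a)))

variable (x : Fin (m + 1) → R) (a : R)

theorem matrixXxa_row_zero : matrixXxa x a 0 = 0 := rfl

theorem matrixXxa_row_castSucc_succ (i : Fin m) : matrixXxa x a i.castSucc.succ =
    Pi.single i.succ.succ 1 + Pi.single 0 (x i.castSucc) := by
  ext j
  simp [matrixXxa]

theorem matrixXxa_row_last : matrixXxa x a (Fin.last m).succ =
    Pi.single 0 (x (Fin.last m)) + Pi.single 1 a := by
  ext j
  simp [matrixXxa, -Fin.succ_last]

theorem eq_matrixXxa_of_apply {X : Matrix (Fin (m + 2)) (Fin (m + 2)) R}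
    (hX : ∀ i j : Fin (m + 2), X i j =
      if 1 ≤ (i : ℕ) ∧ (i : ℕ) ≤ m ∧ (j : ℕ) = (i : ℕ) + 1 then 1
      else if (j : ℕ) = 0 ∧ 1 ≤ (i : ℕ) then x ⟨(i : ℕ) - 1, by omega⟩
      else if (i : ℕ) = m + 1 ∧ (j : ℕ) = 1 then a
      else 0) :
    X = matrixXxa x a := by
  ext i j
  rw [hX]
  refine Fin.cases ?_ (fun i => ?_) i
  · simp [matrixXxa_row_zero]
  · refine Fin.lastCases ?_ (fun i => ?_) i
    · simp only [matrixXxa_row_last, Pi.add_apply, Pi.single_apply, Fin.ext_iff, Fin.val_zero,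
        Fin.val_one]
      grind
    · simp only [matrixXxa_row_castSucc_succ, Pi.add_apply, Pi.single_apply, Fin.ext_iff,
        Fin.val_zero]
      grind

theorem matrixXxa_pow_succ_row_zero (k : ℕ) : (matrixXxa x a ^ (k + 1)) 0 = 0 := by
  rw [pow_succ', mul_apply_eq_vecMul, matrixXxa_row_zero, zero_vecMul]

theorem single_zero_vecMul_matrixXxa_pow_succ (c : R) (k : ℕ) :
    Pi.single 0 c ᵥ* matrixXxa x a ^ (k + 1) = 0 := by
  ext j
  simp [matrixXxa_pow_succ_row_zero]

theorem single_zero_vecMul_matrixXxa (c : R) : Pi.single 0 c ᵥ* matrixXxa x a = 0 := by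
  simpa using single_zero_vecMul_matrixXxa_pow_succ x a c 0

theorem matrixXxa_pow_add_two_row_castSucc_succ (k : ℕ) (i : Fin m) :
    (matrixXxa x a ^ (k + 2)) i.castSucc.succ = (matrixXxa x a ^ (k + 1)) i.succ.succ := by
  rw [pow_succ', mul_apply_eq_vecMul, matrixXxa_row_castSucc_succ, add_vecMul,
    single_zero_vecMul_matrixXxa_pow_succ, add_zero, single_one_vecMul, row]

theorem matrixXxa_pow_succ_row_succ (k : ℕ) (i : Fin (m + 1)) :
    (matrixXxa x a ^ (k + 1)) i.succ = (matrixXxa x a ^ (k + i + 1)) 1 := by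
  induction i using Fin.induction generalizing k with
  | zero => rfl
  | succ i ih =>
    rw [← matrixXxa_pow_add_two_row_castSucc_succ, ih (k + 1), Fin.val_succ, Fin.val_castSucc,
      add_assoc k, add_comm 1]

theorem matrixXxa_pow_row_one : (matrixXxa x a ^ (m + 1)) 1 =
    Pi.single 0 (x (Fin.last m)) + Pi.single 1 a := by
  have h := matrixXxa_pow_succ_row_succ x a 0 (Fin.last m)
  rw [zero_add, zero_add, pow_one, matrixXxa_row_last, Fin.val_last] at h
  exact h.symm

theorem exists_matrixXxa_pow_row_succ_eq (i : Fin (m + 1)) :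
    ∃ t, (matrixXxa x a ^ (m + 1)) i.succ = Pi.single 0 t + Pi.single i.succ a := by
  induction i using Fin.induction with
  | zero => exact ⟨x (Fin.last m), matrixXxa_pow_row_one x a⟩
  | succ i ih =>
    obtain ⟨t, ht⟩ := ih
    refine ⟨a * x i.castSucc, ?_⟩
    calc (matrixXxa x a ^ (m + 1)) i.succ.succ
        = (matrixXxa x a ^ (m + 1)) i.castSucc.succ ᵥ* matrixXxa x a := by
          rw [← matrixXxa_pow_add_two_row_castSucc_succ, pow_succ, mul_apply_eq_vecMul]
      _ = a • matrixXxa x a i.castSucc.succ := by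
          rw [ht, add_vecMul, single_zero_vecMul_matrixXxa, zero_add, single_vecMul, row]
      _ = Pi.single 0 (a * x i.castSucc) + Pi.single i.succ.succ a := by
          simp [matrixXxa_row_castSucc_succ, smul_add, ← Pi.single_smul, add_comm]

theorem trace_smul_one_sub_matrixXxa_pow :
    (a • (1 : Matrix (Fin (m + 2)) (Fin (m + 2)) R) - matrixXxa x a ^ (m + 1)).trace = a := by
  have hdiag (i : Fin (m + 1)) : (matrixXxa x a ^ (m + 1)) i.succ i.succ = a := by
    obtain ⟨t, ht⟩ := exists_matrixXxa_pow_row_succ_eq x a i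
    simp [ht]
  rw [trace, Fin.sum_univ_succ]
  simp [hdiag, matrixXxa_pow_succ_row_zero]

theorem single_zero_mem_rowKrylov_matrixXxa (c : R) :
    Pi.single 0 (x (Fin.last m) - a * c) ∈
      rowKrylov (matrixXxa x a) (Pi.single 0 c + Pi.single 1 1) := by
  set v : Fin (m + 2) → R := Pi.single 0 c + Pi.single 1 1 with hv
  have hpow : v ᵥ* matrixXxa x a ^ (m + 1) = Pi.single 0 (x (Fin.last m)) + Pi.single 1 a := by
    rw [hv, add_vecMul, single_zero_vecMul_matrixXxa_pow_succ, zero_add, single_one_vecMul, row,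
      matrixXxa_pow_row_one]
  have hcomb : Pi.single 0 (x (Fin.last m) - a * c) =
      v ᵥ* matrixXxa x a ^ (m + 1) - a • v := by
    rw [hpow]
    simp [hv, smul_add, ← Pi.single_smul, Pi.single_sub]
  rw [hcomb]
  exact sub_mem (vecMul_pow_mem_rowKrylov _ v (m + 1))
    (Submodule.smul_mem _ a (self_mem_rowKrylov _ v))

theorem single_mem_rowKrylov_matrixXxa (c : R) (i : Fin (m + 2)) :
    Pi.single i (x (Fin.last m) - a * c) ∈
      rowKrylov (matrixXxa x a) (Pi.single 0 c + Pi.single 1 1) := by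
  set d := x (Fin.last m) - a * c
  set N := rowKrylov (matrixXxa x a) (Pi.single 0 c + Pi.single 1 1)
  have hzero : Pi.single 0 d ∈ N := single_zero_mem_rowKrylov_matrixXxa x a c
  refine Fin.cases hzero (fun i => ?_) i
  induction i using Fin.induction with
  | zero =>
    have hone : (Pi.single 1 d : Fin (m + 2) → R) =
        d • (Pi.single 0 c + Pi.single 1 1) - c • Pi.single 0 d := by
      simp [smul_add, ← Pi.single_smul, mul_comm]
    rw [Fin.succ_zero_eq_one, hone]
    exact sub_mem (N.smul_mem d (self_mem_rowKrylov _ _)) (N.smul_mem c hzero)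
  | succ i ih =>
    have hsucc : (Pi.single i.succ.succ d : Fin (m + 2) → R) =
        Pi.single i.castSucc.succ d ᵥ* matrixXxa x a - x i.castSucc • Pi.single 0 d := by
      simp [matrixXxa_row_castSucc_succ, row, smul_add, ← Pi.single_smul, mul_comm]
    rw [hsucc]
    exact sub_mem (vecMul_mem_rowKrylov ih) (N.smul_mem _ hzero)

variable [IsDomain R] {x a}

theorem rank_glCent_matrixXxa (h : x (Fin.last m) ≠ 0 ∨ a ≠ 0) :
    Module.rank R (glCent (matrixXxa x a)) = (m + 2 : ℕ) := by
  obtain ⟨c, hc⟩ : ∃ c, x (Fin.last m) - a * c ≠ 0 := by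
    by_cases hx : x (Fin.last m) = 0
    · exact ⟨1, by simpa [hx] using h⟩
    · exact ⟨0, by simpa using hx⟩
  exact rank_glCent_of_single_mem_rowKrylov hc (single_mem_rowKrylov_matrixXxa x a c)

theorem rank_slCent_matrixXxa (ha : a ≠ 0) :
    Module.rank R (slCent (matrixXxa x a)) = (m + 1 : ℕ) := by
  have hmem := aeval_mem_glCent_s8 (matrixXxa x a) (Polynomial.C a - Polynomial.X ^ (m + 1))
  have htrace := trace_smul_one_sub_matrixXxa_pow x a
  simp only [map_sub, map_pow, Polynomial.aeval_C, Polynomial.aeval_X,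
    Algebra.algebraMap_eq_smul_one] at hmem
  have hrank := rank_slCent_add_one hmem (htrace.trans_ne ha)
  rw [rank_glCent_matrixXxa (Or.inr ha), Nat.cast_succ] at hrank
  exact Cardinal.add_one_inj.1 hrank

end MatrixXxa

theorem Xxa_regular_general {R : Type*} [CommRing R] [IsDomain R] {m : ℕ} (x : Fin (m + 1) → R)
    (a : R) :
    ((x (Fin.last m) ≠ 0 ∨ a ≠ 0) → Module.finrank R (glCent (matrixXxa x a)) = m + 2) ∧
      (a ≠ 0 → Module.finrank R (slCent (matrixXxa x a)) = m + 1) :=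
  ⟨fun h => Module.finrank_eq_of_rank_eq (rank_glCent_matrixXxa h),
    fun ha => Module.finrank_eq_of_rank_eq (rank_slCent_matrixXxa ha)⟩

/-- Regularity of `X(x,a)`: if `x_{n-1} ≠ 0` or `a ≠ 0` then `X(x,a)` is `gl_n(K)`-regular,
and if `a ≠ 0` then `X(x,a)` is `sl_n(K)`-regular. Indices are `0`-based: entry `(i, i+1)`
equals `1` for `1 ≤ i ≤ n-2`, entry `(i, 0)` equals `x_{i-1}` for `1 ≤ i`, and entry
`(n-1, 1)` equals `a`. -/
theorem Xxa_regular {K : Type*} [Field K] {n : ℕ} (hn : 3 ≤ n)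
    (x : Fin (n - 1) → K) (a : K) (X : Matrix (Fin n) (Fin n) K)
    (hX : ∀ i j : Fin n, X i j =
      if 1 ≤ (i : ℕ) ∧ (i : ℕ) ≤ n - 2 ∧ (j : ℕ) = (i : ℕ) + 1 then 1
      else if (j : ℕ) = 0 ∧ 1 ≤ (i : ℕ) then x ⟨(i : ℕ) - 1, by have := i.isLt; omega⟩
      else if (i : ℕ) = n - 1 ∧ (j : ℕ) = 1 then a
      else 0) :
    ((x ⟨n - 2, by omega⟩ ≠ 0 ∨ a ≠ 0) → Module.finrank K (glCent X) = n) ∧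
      (a ≠ 0 → Module.finrank K (slCent X) = n - 1) := by
  obtain ⟨m, rfl⟩ := Nat.exists_eq_add_of_le' (Nat.le_of_succ_le hn)
  rw [eq_matrixXxa_of_apply x a hX]
  exact Xxa_regular_general x a
end

section
/- Let K be a field of characteristic 2. A trace-zero matrix A ∈ sl_2(K) can be written as A = XY − YX with X, Y ∈ sl_2(K) both of trace zero if and only if A is a scalar matrix. -/
open Matrix

/-!
Polarising the Cayley–Hamilton identity `X ^ 2 = tr X • X - det X • 1` shows that the
anticommutator `X * Y + Y * X` of two trace-zero `2 × 2` matrices is the scalar matrix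
`tr (X * Y) • 1`, over any commutative ring. Conversely, `c • 1` is the anticommutator of
`c E₀₁` and `E₁₀`. In characteristic two, commutators and anticommutators coincide.
-/

theorem anticommutator_single_eq_smul_one {R : Type*} [Semiring R] (c : R) :
    single (0 : Fin 2) (1 : Fin 2) c * single 1 0 1 + single 1 0 1 * single 0 1 c = c • 1 := by
  simp only [single_mul_single_same, mul_one, one_mul]
  ext i j
  fin_cases i <;> fin_cases j <;> simp

section CommRing

variable {R : Type*} [CommRing R]

theorem anticommutator_fin_two (X Y : Matrix (Fin 2) (Fin 2) R) :
    X * Y + Y * X =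
      X.trace • Y + Y.trace • X + ((X * Y).trace - X.trace * Y.trace) • 1 := by
  simp only [← Matrix.ext_iff, Fin.forall_fin_two, Matrix.add_apply, Matrix.smul_apply, smul_eq_mul,
    mul_apply, trace_fin_two, Fin.sum_univ_two, one_apply_eq, one_apply_ne zero_ne_one,
    one_apply_ne one_ne_zero]
  refine ⟨⟨?_, ?_⟩, ?_, ?_⟩ <;> ring

theorem anticommutator_eq_trace_smul_one {X Y : Matrix (Fin 2) (Fin 2) R}
    (hX : X.trace = 0) (hY : Y.trace = 0) : X * Y + Y * X = (X * Y).trace • 1 := by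
  simpa [hX, hY] using anticommutator_fin_two X Y

theorem exists_anticommutator_eq_iff_scalar (A : Matrix (Fin 2) (Fin 2) R) :
    (∃ X Y : Matrix (Fin 2) (Fin 2) R, X.trace = 0 ∧ Y.trace = 0 ∧ X * Y + Y * X = A) ↔
      ∃ c : R, A = c • (1 : Matrix (Fin 2) (Fin 2) R) := by
  constructor
  · rintro ⟨X, Y, hX, hY, rfl⟩
    exact ⟨(X * Y).trace, anticommutator_eq_trace_smul_one hX hY⟩
  · rintro ⟨c, rfl⟩
    exact ⟨single 0 1 c, single 1 0 1, trace_single_eq_of_ne _ _ _ zero_ne_one,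
      trace_single_eq_of_ne _ _ _ one_ne_zero, anticommutator_single_eq_smul_one c⟩

theorem sl2_commutator_iff_scalar_char_two_general [CharP R 2] (A : Matrix (Fin 2) (Fin 2) R) :
    (∃ X Y : Matrix (Fin 2) (Fin 2) R, X.trace = 0 ∧ Y.trace = 0 ∧ X * Y - Y * X = A) ↔
      ∃ c : R, A = c • (1 : Matrix (Fin 2) (Fin 2) R) := by
  simpa only [CharTwo.sub_eq_add] using exists_anticommutator_eq_iff_scalar A

end CommRing

/-- Over a field of characteristic `2`, a trace-zero `2 × 2` matrix is a commutator of two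
trace-zero matrices if and only if it is scalar. -/
theorem sl2_commutator_iff_scalar_char_two {K : Type*} [Field K] (hchar : ringChar K = 2)
    (A : Matrix (Fin 2) (Fin 2) K) (hA : A.trace = 0) :
    (∃ X Y : Matrix (Fin 2) (Fin 2) K, X.trace = 0 ∧ Y.trace = 0 ∧ X * Y - Y * X = A) ↔
      ∃ c : K, A = c • (1 : Matrix (Fin 2) (Fin 2) K) := by
  have : CharP K 2 := ringChar.of_eq hchar
  exact sl2_commutator_iff_scalar_char_two_general A
end

section
/- Let K be a field of characteristic different from 2. Then every trace-zero matrix A ∈ sl_2(K) can be written as A = XY − YX for some trace-zero matrices X, Y ∈ sl_2(K). -/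
open Matrix

/-!
Let `a = r * a'` and `b = r * b'` be the first row of the given matrix, with `a'` and `b'` coprime,
and let `c` be its lower left entry. A lower triangular first factor with first column
`(-b' / 2, a')` and a second factor with upper right entry `-r` give a commutator whose first row is
`(a, b)`, whatever the first column `(t, s)` of the second factor. The lower left entry is then
`2 * a' * t + b' * s`, which takes the value `c` because `2` is a unit, so that `2 * a'`
and `b'` are again coprime.
-/

section CommRing

variable {R : Type*} [CommRing R]

theorem eta_fin_two_of_trace_eq_zero {A : Matrix (Fin 2) (Fin 2) R} (hA : A.trace = 0) :
    A = !![A 0 0, A 0 1; A 1 0, -A 0 0] := by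
  rw [trace_fin_two] at hA
  rw [← eq_neg_of_add_eq_zero_right hA]
  exact eta_fin_two A

theorem commutator_traceless_lowerTriangular (p q r s t : R) :
    !![-p, 0; q, p] * !![t, -r; s, -t] - !![t, -r; s, -t] * !![-p, 0; q, p] =
      !![r * q, r * (2 * p); 2 * (q * t + p * s), -(r * q)] := by
  ext i j
  fin_cases i <;> fin_cases j <;> simp <;> ring

theorem exists_commutator_eq_of_isCoprime (h2 : IsUnit (2 : R)) {a' b' : R}
    (hcoprime : IsCoprime a' b') (r c : R) :
    ∃ X Y : Matrix (Fin 2) (Fin 2) R, X.trace = 0 ∧ Y.trace = 0 ∧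
      X * Y - Y * X = !![r * a', r * b'; c, -(r * a')] := by
  obtain ⟨p, rfl⟩ : 2 ∣ b' := h2.dvd
  obtain ⟨d, rfl⟩ : 2 ∣ c := h2.dvd
  obtain ⟨u, v, huv⟩ := hcoprime
  have hd : a' * (u * d) + p * (2 * v * d) = d := by linear_combination d * huv
  refine ⟨!![-p, 0; a', p], !![u * d, -r; 2 * v * d, -(u * d)],
    by simp [trace_fin_two], by simp [trace_fin_two], ?_⟩
  rw [commutator_traceless_lowerTriangular, hd]

end CommRing

section Bezout

variable {R : Type*} [CommRing R] [IsDomain R] [IsBezout R]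

theorem exists_eq_mul_and_isCoprime (a b : R) :
    ∃ r a' b' : R, a = r * a' ∧ b = r * b' ∧ IsCoprime a' b' := by
  classical
  let := IsBezout.toGCDDomain R
  obtain ⟨a', b', ha, hb, hunit⟩ := extract_gcd a b
  exact ⟨gcd a b, a', b', ha, hb, (gcd_isUnit_iff a' b').mp hunit⟩

theorem sl2_commutator_char_ne_two_general (h2 : IsUnit (2 : R))
    (A : Matrix (Fin 2) (Fin 2) R) (hA : A.trace = 0) :
    ∃ X Y : Matrix (Fin 2) (Fin 2) R, X.trace = 0 ∧ Y.trace = 0 ∧ X * Y - Y * X = A := by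
  obtain ⟨r, a', b', ha, hb, hcoprime⟩ := exists_eq_mul_and_isCoprime (A 0 0) (A 0 1)
  rw [eta_fin_two_of_trace_eq_zero hA, ha, hb]
  exact exists_commutator_eq_of_isCoprime h2 hcoprime r (A 1 0)

end Bezout

/-- Over a field of characteristic different from `2`, every trace-zero `2 × 2` matrix is a
commutator of two trace-zero matrices. -/
theorem sl2_commutator_char_ne_two {K : Type*} [Field K] (hchar : ringChar K ≠ 2)
    (A : Matrix (Fin 2) (Fin 2) K) (hA : A.trace = 0) :
    ∃ X Y : Matrix (Fin 2) (Fin 2) K, X.trace = 0 ∧ Y.trace = 0 ∧ X * Y - Y * X = A := by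
  have h2 : IsUnit (2 : K) := (Ring.two_ne_zero hchar).isUnit
  exact sl2_commutator_char_ne_two_general h2 A hA
end

section
/- Let S be a commutative ring with identity and n ≥ 1 such that n·1 = 0 in S. Then for every λ ∈ S there exist trace-zero matrices X, Y ∈ sl_n(S) such that XY − YX = λ·1_n, and X can be taken to be the matrix with ones on the superdiagonal and zeros elsewhere (in particular, a companion matrix, hence gl_n(S)-regular). -/
open Matrix

/-! Let `w` be the partial sums of `d`. Multiplying the shift matrix by the subdiagonal matrix with
weights `w` in the two orders gives diagonal matrices with entries `w (i + 1)` and `w i`, whose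
difference is `d i`. At the corners of the matrix this needs `w 0 = 0`, which holds by definition,
and `w n = 0`, which says that `diagonal d` has trace zero; for constant `d = λ` this is
`n • λ = 0`. -/

section Superdiagonal

variable {n : ℕ} {R : Type*}

/-- The matrix with weights `w 1, …, w (n - 1)` along the superdiagonal; its transpose is the
corresponding subdiagonal matrix. The weights `w 0` and `w n` fall outside the matrix: they are
carried along so that boundary conditions can be imposed on them. -/
def superdiagonal [Zero R] (w : Fin (n + 1) → R) : Matrix (Fin n) (Fin n) R :=
  of fun i j => if j.castSucc = i.succ then w i.succ else 0

theorem superdiagonal_apply [Zero R] (w : Fin (n + 1) → R) (i j : Fin n) :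
    superdiagonal w i j = if j.castSucc = i.succ then w i.succ else 0 :=
  rfl

theorem trace_superdiagonal [AddCommMonoid R] (w : Fin (n + 1) → R) :
    (superdiagonal w).trace = 0 := by
  simp [trace, superdiagonal_apply, Fin.castSucc_lt_succ.ne]

theorem superdiagonal_mul_transpose_superdiagonal [NonUnitalNonAssocSemiring R]
    {u v : Fin (n + 1) → R} (h : u (Fin.last n) * v (Fin.last n) = 0) :
    superdiagonal u * (superdiagonal v)ᵀ = diagonal fun i => u i.succ * v i.succ := by
  ext i j
  let f (k : Fin (n + 1)) : R :=
    (if k = i.succ then u k else 0) * (if k = j.succ then v k else 0)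
  have f_last : f (Fin.last n) = 0 := by
    simp only [f]; split_ifs <;> simp [h]
  calc (superdiagonal u * (superdiagonal v)ᵀ) i j
      = ∑ k : Fin n, f k.castSucc := by
        simp +contextual [mul_apply, superdiagonal_apply, f]
    _ = ∑ k, f k := by rw [Fin.sum_univ_castSucc, f_last, add_zero]
    _ = diagonal (fun i => u i.succ * v i.succ) i j := by
        obtain rfl | hij := eq_or_ne i j <;> simp [f, *, Ne.symm]

theorem transpose_superdiagonal_mul_superdiagonal [NonUnitalNonAssocSemiring R]
    {u v : Fin (n + 1) → R} (h : v 0 * u 0 = 0) :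
    (superdiagonal v)ᵀ * superdiagonal u = diagonal fun i => v i.castSucc * u i.castSucc := by
  ext i j
  let f (k : Fin (n + 1)) : R :=
    (if i.castSucc = k then v k else 0) * (if j.castSucc = k then u k else 0)
  have f_zero : f 0 = 0 := by
    simp only [f]; split_ifs <;> simp [h]
  calc ((superdiagonal v)ᵀ * superdiagonal u) i j
      = ∑ k : Fin n, f k.succ := rfl
    _ = ∑ k, f k := by rw [Fin.sum_univ_succ, f_zero, zero_add]
    _ = diagonal (fun i => v i.castSucc * u i.castSucc) i j := by
        obtain rfl | hij := eq_or_ne i j <;> simp [f, *]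

theorem commutator_superdiagonal_one_transpose_superdiagonal [NonAssocRing R]
    {w : Fin (n + 1) → R} (h_zero : w 0 = 0) (h_last : w (Fin.last n) = 0) :
    superdiagonal 1 * (superdiagonal w)ᵀ - (superdiagonal w)ᵀ * superdiagonal 1 =
      diagonal fun i => w i.succ - w i.castSucc := by
  rw [superdiagonal_mul_transpose_superdiagonal (by simp [h_last]),
    transpose_superdiagonal_mul_superdiagonal (by simp [h_zero]), diagonal_sub]
  simp

end Superdiagonal

theorem partialSum_last {M : Type*} [AddCommMonoid M] {n : ℕ} (d : Fin n → M) :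
    Fin.partialSum d (Fin.last n) = ∑ i, d i := by
  rw [Fin.partialSum, Fin.val_last, List.take_of_length_le (by simp), List.sum_ofFn]

theorem scalar_is_commutator_of_char_dvd_general {R : Type*} [NonAssocRing R] {n : ℕ}
    {d : Fin n → R} (hd : ∑ i, d i = 0) (X : Matrix (Fin n) (Fin n) R)
    (hX : ∀ i j : Fin n, X i j = if (j : ℕ) = (i : ℕ) + 1 then 1 else 0) :
    X.trace = 0 ∧
      ∃ Y : Matrix (Fin n) (Fin n) R, Y.trace = 0 ∧ X * Y - Y * X = diagonal d := by
  obtain rfl : X = superdiagonal 1 := by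
    ext i j
    simp [hX, superdiagonal_apply, Fin.ext_iff]
  refine ⟨trace_superdiagonal 1, (superdiagonal (Fin.partialSum d))ᵀ, ?_, ?_⟩
  · rw [trace_transpose, trace_superdiagonal]
  · rw [commutator_superdiagonal_one_transpose_superdiagonal (Fin.partialSum_zero d)
      ((partialSum_last d).trans hd)]
    simp [Fin.partialSum_succ]

/-- If `n·1 = 0` in the commutative ring `S`, then every scalar matrix `λ·1_n` is a
commutator `[X, Y]` of trace-zero matrices, where `X` can be taken to be the matrix with
ones on the superdiagonal and zeros elsewhere (the companion matrix of `x^n`). -/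
theorem scalar_is_commutator_of_char_dvd {S : Type*} [CommRing S] {n : ℕ} (hn : 1 ≤ n)
    (hns : (n : S) = 0) (lam : S)
    (X : Matrix (Fin n) (Fin n) S)
    (hX : ∀ i j : Fin n, X i j = if (j : ℕ) = (i : ℕ) + 1 then 1 else 0) :
    X.trace = 0 ∧
      ∃ Y : Matrix (Fin n) (Fin n) S,
        Y.trace = 0 ∧ X * Y - Y * X = lam • (1 : Matrix (Fin n) (Fin n) S) := by
  rw [smul_one_eq_diagonal]
  exact scalar_is_commutator_of_char_dvd_general (by simp [hns]) X hX
end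

section
/- Let K be a field, n ≥ 1, λ ∈ K with λ ≠ 0, and suppose X ∈ sl_n(K) is gl_n(K)-regular and XY − YX = λ·1_n for some Y ∈ M_n(K). Then X is not sl_n(K)-regular; indeed tr(X^i) = 0 for all i = 0, …, n−1. -/
open Matrix

theorem trace_mul_commutator_of_commute {R ι : Type*} [NonUnitalCommRing R] [Fintype ι]
    {X Z : Matrix ι ι R} (hZ : Commute X Z) (Y : Matrix ι ι R) :
    (Z * (X * Y - Y * X)).trace = 0 := by
  rw [Matrix.mul_sub, trace_sub, sub_eq_zero]
  calc (Z * (X * Y)).trace = (X * (Z * Y)).trace := by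
        rw [← Matrix.mul_assoc, ← hZ.eq, Matrix.mul_assoc]
    _ = (Z * Y * X).trace := trace_mul_comm _ _
    _ = (Z * (Y * X)).trace := by rw [Matrix.mul_assoc]

section CommRing

variable {R : Type*} [CommRing R] {lam : R}

theorem trace_eq_zero_of_commute_of_commutator_eq_scalar {ι : Type*} [Fintype ι] [DecidableEq ι]
    (hlam : IsRegular lam) {X Y Z : Matrix ι ι R}
    (hXY : X * Y - Y * X = lam • (1 : Matrix ι ι R)) (hZ : Commute X Z) :
    Z.trace = 0 := by
  have htrace : lam * Z.trace = 0 := by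
    simpa [hXY] using trace_mul_commutator_of_commute hZ Y
  exact hlam.left.mul_left_eq_zero_iff.mp htrace

variable {n : ℕ} {X Y : Matrix (Fin n) (Fin n) R}

theorem slCent_eq_glCent_of_commutator_eq_scalar (hlam : IsRegular lam)
    (hXY : X * Y - Y * X = lam • (1 : Matrix (Fin n) (Fin n) R)) :
    slCent X = glCent X :=
  Submodule.ext fun _ =>
    and_iff_right_of_imp (trace_eq_zero_of_commute_of_commutator_eq_scalar hlam hXY)

theorem not_slRegular_of_commutator_eq_scalar_general (hn : 1 ≤ n) (hlam : IsRegular lam)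
    (hreg : Module.finrank R (glCent X) = n)
    (hXY : X * Y - Y * X = lam • (1 : Matrix (Fin n) (Fin n) R)) :
    (∀ i : ℕ, (X ^ i).trace = 0) ∧ Module.finrank R (slCent X) ≠ n - 1 := by
  refine ⟨fun i => trace_eq_zero_of_commute_of_commutator_eq_scalar hlam hXY
    (Commute.self_pow X i), ?_⟩
  rw [slCent_eq_glCent_of_commutator_eq_scalar hlam hXY, hreg]
  omega

end CommRing

/-- If `X` is `gl_n(K)`-regular, trace zero, and `[X, Y] = λ·1_n` with `λ ≠ 0`, then
`tr(X^i) = 0` for `i = 0, …, n-1` and `X` is not `sl_n(K)`-regular. -/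
theorem not_slRegular_of_commutator_eq_scalar {K : Type*} [Field K] {n : ℕ} (hn : 1 ≤ n)
    (lam : K) (hlam : lam ≠ 0)
    (X : Matrix (Fin n) (Fin n) K) (hX : X.trace = 0)
    (hreg : Module.finrank K (glCent X) = n)
    (Y : Matrix (Fin n) (Fin n) K)
    (hXY : X * Y - Y * X = lam • (1 : Matrix (Fin n) (Fin n) K)) :
    (∀ i : ℕ, i ≤ n - 1 → (X ^ i).trace = 0) ∧
      Module.finrank K (slCent X) ≠ n - 1 :=
  (not_slRegular_of_commutator_eq_scalar_general hn (.of_ne_zero hlam) hreg hXY).imp_left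
    fun htrace i _ => htrace i
end

section
/- Let K be a field and A ∈ sl_n(K) a trace-zero matrix with n ≥ 3. Then there exist trace-zero matrices X, Y ∈ sl_n(K) such that XY − YX = A. Moreover, if A is scalar, X can be chosen to be gl_n(K)-regular, and if A is non-scalar, X can be chosen to be sl_n(K)-regular. -/
open Matrix

/-!
A scalar matrix `c • 1` with `n * c = 0` is the commutator of the derivative and of multiplication
by `c * x` on truncated divided powers.

For non-scalar `A`, the equation `⁅X, Y⁆ = A` is solvable in `Y` if and only if `A` is orthogonal to
the centralizer of `X` for the trace form. If `X` has a cyclic vector, this centralizer is `K[X]`,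
and the condition reads `tr (X ^ k * A) = 0` for all `k`. When `A` is in Hessenberg form, take `X`
upper bidiagonal with diagonal `e, 1 - e, e, …`, where `e ∈ {0, 1}`: then `X ^ 2 - X` lives two
superdiagonals up and is orthogonal to `A`, so that the single condition `tr (X * A) = 0` remains,
and a transvection achieves it.

It remains to make `X` traceless, with a centralizer not contained in the traceless matrices. If
`n ≠ 0` in `K`, subtract a scalar from `X`. Otherwise, give `A` a zero diagonal (Fillmore) and
let `X` be a block sum of a small matrix `S`, whose trace compensates, and an alternating bidiagonal
matrix, whose eigenvalues `0` and `1` are not shared by `S`. For odd `n` the block `S` has size `1`.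
For even `n` it is built on two indices `i`, `j` for which `A i j` and `A j i` are both zero or both
nonzero; it has size `2` if `n / 2 = 0` in `K`. Otherwise `K` has characteristic `2` and it has size
`3`; over `𝔽₂` its three indices come instead from the Ramsey bound `R(3, 3) ≤ 6`.
-/

namespace RegularCommutator

open Module Polynomial

variable {K : Type*} [Field K] {R : Type*} [CommRing R] {ι κ μ : Type*} [Fintype ι] [DecidableEq ι]
  [Fintype κ] [DecidableEq κ] [Fintype μ] [DecidableEq μ]

/-! ### Cyclic vectors and regular factors -/

theorem aeval_mul_eq_mul_aeval {M : Matrix ι ι R} {N : Matrix κ κ R} {P : Matrix ι κ R}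
    (h : M * P = P * N) (p : R[X]) : aeval M p * P = P * aeval N p := by
  induction p using Polynomial.induction_on' with
  | add p q hp hq => simp only [map_add, Matrix.add_mul, Matrix.mul_add, hp, hq]
  | monomial n a =>
    have hn : M ^ n * P = P * N ^ n := by
      induction n with
      | zero => simp
      | succ n ih =>
        rw [pow_succ, Matrix.mul_assoc, h, ← Matrix.mul_assoc, ih, Matrix.mul_assoc, ← pow_succ]
    simp [aeval_monomial, Algebra.algebraMap_eq_smul_one, hn]

/-- The row vector `v` is cyclic for `M`: every row vector has the form `v p(M)` for some
polynomial `p`. -/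
def IsCyclicVector (M : Matrix ι ι R) (v : ι → R) : Prop :=
  Function.Surjective fun p : R[X] => v ᵥ* aeval M p

namespace IsCyclicVector

variable {M Z : Matrix ι ι R} {v : ι → R}

theorem eq_zero_of_vecMul_eq_zero (hv : IsCyclicVector M v) (hZ : Commute M Z)
    (h : v ᵥ* Z = 0) : Z = 0 := by
  refine ext_of_single_vecMul fun i => ?_
  obtain ⟨p, hp⟩ := hv (Pi.single i 1)
  rw [← hp, vecMul_vecMul, aeval_mul_eq_mul_aeval hZ, ← vecMul_vecMul, h, zero_vecMul, vecMul_zero]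

theorem exists_aeval_eq (hv : IsCyclicVector M v) (hZ : Commute M Z) :
    ∃ p : R[X], aeval M p = Z := by
  obtain ⟨p, hp⟩ := hv (v ᵥ* Z)
  refine ⟨p, sub_eq_zero.1 (hv.eq_zero_of_vecMul_eq_zero ?_ ?_)⟩
  · exact Commute.sub_right (aeval_mul_eq_mul_aeval (Commute.refl M) p).symm hZ
  · rw [vecMul_sub, sub_eq_zero]
    exact hp

theorem finrank_centralizer [Nontrivial R] (hv : IsCyclicVector M v) :
    finrank R (Subalgebra.centralizer R {M}) = Fintype.card ι := by
  let f : Subalgebra.centralizer R {M} →ₗ[R] (ι → R) :=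
    (vecMulBilin R R v).comp (Subalgebra.centralizer R {M}).val.toLinearMap
  have hf : Function.Bijective f := by
    refine ⟨(injective_iff_map_eq_zero f).2 fun Z hZ => Subtype.ext ?_, fun w => ?_⟩
    · exact hv.eq_zero_of_vecMul_eq_zero (Subalgebra.mem_centralizer_iff R |>.1 Z.2 M rfl) hZ
    · obtain ⟨p, hp⟩ := hv w
      exact ⟨⟨aeval M p, by
        simpa [Subalgebra.mem_centralizer_iff] using
          (aeval_mul_eq_mul_aeval (Commute.refl M) p).symm⟩, hp⟩
  rw [(LinearEquiv.ofBijective f hf).finrank_eq, finrank_fintype_fun_eq_card]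

end IsCyclicVector

theorem trace_aeval_mul_eq_zero {M A : Matrix ι ι R}
    (h : ∀ i < Fintype.card ι, (M ^ i * A).trace = 0) (p : R[X]) : (aeval M p * A).trace = 0 := by
  nontriviality R
  have hp : aeval M p = ∑ i : Fin (Fintype.card ι), (p %ₘ M.charpoly).coeff i • M ^ (i : ℕ) := by
    rw [← aeval_modByMonic_eq_self_of_root (aeval_self_charpoly M)]
    conv_lhs => rw [← sum_modByMonic_coeff M.charpoly_monic (charpoly_degree_eq_dim M).le]
    simp [aeval_monomial, Algebra.algebraMap_eq_smul_one]
  simp [hp, Finset.sum_mul, trace_sum, h]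

omit [DecidableEq ι] in
/-- The image of `ad M` is the orthogonal of the centralizer of `M` for the trace form. -/
theorem exists_lie_eq_of_trace_mul_eq_zero {M A : Matrix ι ι K}
    (h : ∀ Z, Commute M Z → (Z * A).trace = 0) : ∃ Y, ⁅M, Y⁆ = A := by
  classical
  by_contra hA
  obtain ⟨f, hfA, hf⟩ := Submodule.exists_le_ker_of_notMem
    (show A ∉ LinearMap.range (LinearMap.mulLeft K M - LinearMap.mulRight K M) from hA)
  let W : Matrix ι ι K := of fun i j => f (single j i 1)
  have hW (N : Matrix ι ι K) : f N = (W * N).trace := by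
    have hf : f = (traceLinearMap ι K K).comp (LinearMap.mulLeft K W) := by
      refine (stdBasis K ι ι).ext fun ⟨i, j⟩ => ?_
      simp [W, stdBasis_eq_single, trace_mul_single]
    exact LinearMap.congr_fun hf N
  refine hfA (hW A ▸ h W (ext_iff_trace_mul_right.2 fun Y => ?_))
  have hY : (W * ⁅M, Y⁆).trace = 0 := hW _ ▸ hf ⟨Y, rfl⟩
  rw [Ring.lie_def, mul_sub, trace_sub, sub_eq_zero] at hY
  rw [mul_assoc W, hY, ← mul_assoc W, trace_mul_comm (W * Y), mul_assoc]

/-- `M` is a regular left factor for `A`: it has a cyclic row vector, and `A` is orthogonal to its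
powers for the trace form. Over a field this says that `M` is regular and that `⁅M, Y⁆ = A` is
solvable, in a form that passes easily to block sums. -/
structure IsRegularFactor (M A : Matrix ι ι R) : Prop where
  exists_isCyclicVector : ∃ v, IsCyclicVector M v
  trace_aeval_mul : ∀ p : R[X], (aeval M p * A).trace = 0

theorem IsRegularFactor.exists_lie_eq {M A : Matrix ι ι K} (h : IsRegularFactor M A) :
    ∃ Y, ⁅M, Y⁆ = A := by
  obtain ⟨v, hv⟩ := h.exists_isCyclicVector
  refine exists_lie_eq_of_trace_mul_eq_zero fun Z hZ => ?_
  obtain ⟨p, rfl⟩ := hv.exists_aeval_eq hZ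
  exact h.trace_aeval_mul p

/-! ### Similarity -/

/-- `A` and `B` represent the same endomorphism in two bases, possibly indexed by different
types. -/
def IsSimilar (A : Matrix ι ι R) (B : Matrix κ κ R) : Prop :=
  ∃ (P : Matrix κ ι R) (Q : Matrix ι κ R), P * Q = 1 ∧ Q * P = 1 ∧ P * A * Q = B

namespace IsSimilar

theorem refl (A : Matrix ι ι R) : IsSimilar A A := ⟨1, 1, by simp, by simp, by simp⟩

theorem trans {A : Matrix ι ι R} {B : Matrix κ κ R} {C : Matrix μ μ R} (hAB : IsSimilar A B)
    (hBC : IsSimilar B C) : IsSimilar A C := by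
  obtain ⟨P, Q, hPQ, hQP, rfl⟩ := hAB
  obtain ⟨S, T, hST, hTS, rfl⟩ := hBC
  refine ⟨S * P, Q * T, ?_, ?_, by simp only [Matrix.mul_assoc]⟩
  · rw [Matrix.mul_assoc, ← Matrix.mul_assoc P, hPQ, Matrix.one_mul, hST]
  · rw [Matrix.mul_assoc, ← Matrix.mul_assoc T, hTS, Matrix.one_mul, hQP]

theorem trace_eq {A : Matrix ι ι R} {B : Matrix κ κ R} (h : IsSimilar A B) :
    B.trace = A.trace := by
  obtain ⟨P, Q, -, hQP, rfl⟩ := h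
  rw [trace_mul_comm, ← Matrix.mul_assoc, hQP, Matrix.one_mul]

theorem submatrix (A : Matrix ι ι R) (e : κ ≃ ι) : IsSimilar A (A.submatrix e e) :=
  ⟨Matrix.submatrix 1 e (Equiv.refl ι), Matrix.submatrix 1 (Equiv.refl ι) e, by
    rw [submatrix_mul_equiv, Matrix.one_mul, submatrix_one_equiv], by
    rw [submatrix_mul_equiv, Matrix.one_mul]; rfl, by
    rw [one_submatrix_mul, mul_submatrix_one]; rfl⟩

theorem fromBlocks {A : Matrix ι ι R} {B : Matrix κ κ R} (h : IsSimilar A B)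
    (U : Matrix ι μ R) (V : Matrix μ ι R) (D : Matrix μ μ R) :
    ∃ U' V', IsSimilar (fromBlocks A U V D) (fromBlocks B U' V' D) := by
  obtain ⟨P, Q, hPQ, hQP, rfl⟩ := h
  refine ⟨P * U, V * Q, Matrix.fromBlocks P 0 0 1, Matrix.fromBlocks Q 0 0 1, ?_, ?_, ?_⟩
  · simp [fromBlocks_multiply, hPQ]
  · simp [fromBlocks_multiply, hQP]
  · simp [fromBlocks_multiply]

end IsSimilar

/-- The conjugate of `A` by the transvection `1 + t E_{ij}`: row `i` gains `t` times row `j`, then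
column `j` loses `t` times column `i`. -/
def transvectionConj (i j : ι) (t : R) (A : Matrix ι ι R) : Matrix ι ι R :=
  transvection i j t * A * transvection i j (-t)

theorem transvectionConj_apply (i j : ι) (t : R) (A : Matrix ι ι R) (p q : ι) :
    transvectionConj i j t A p q = A p q + (if p = i then t * A j q else 0) -
      if q = j then t * (A p i + if p = i then t * A j i else 0) else 0 := by
  by_cases hp : p = i <;> by_cases hq : q = j
  · subst hp hq
    simp only [transvectionConj, mul_transvection_apply_same, transvection_mul_apply_same, if_true]
    ring
  · subst hp; simp [transvectionConj, hq]
  · subst hq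
    simp only [transvectionConj, mul_transvection_apply_same,
      transvection_mul_apply_of_ne _ _ _ _ hp, if_neg hp, if_true]
    ring
  · simp [transvectionConj, hp, hq]

theorem isSimilar_transvectionConj {i j : ι} (hij : i ≠ j) (t : R) (A : Matrix ι ι R) :
    IsSimilar A (transvectionConj i j t A) :=
  ⟨transvection i j t, transvection i j (-t),
    by simp [transvection_mul_transvection_same _ _ hij],
    by simp [transvection_mul_transvection_same _ _ hij], rfl⟩

section Conj

variable {P : Matrix κ ι R} {Q : Matrix ι κ R}

theorem aeval_conj (hPQ : P * Q = 1) (hQP : Q * P = 1) (M : Matrix κ κ R) (p : R[X]) :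
    aeval (Q * M * P) p = Q * aeval M p * P := by
  have h : Q * M * P * Q = Q * M := by rw [Matrix.mul_assoc, hPQ, Matrix.mul_one]
  rw [← aeval_mul_eq_mul_aeval h, Matrix.mul_assoc _ Q P, hQP, Matrix.mul_one]

theorem IsRegularFactor.conj (hPQ : P * Q = 1) (hQP : Q * P = 1) {M : Matrix κ κ R}
    {A : Matrix ι ι R} (h : IsRegularFactor M (P * A * Q)) : IsRegularFactor (Q * M * P) A := by
  obtain ⟨⟨v, hv⟩, htr⟩ := h
  refine ⟨⟨v ᵥ* P, fun w => ?_⟩, fun p => ?_⟩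
  · obtain ⟨p, hp⟩ := hv (w ᵥ* Q)
    refine ⟨p, ?_⟩
    beta_reduce at hp ⊢
    rw [aeval_conj hPQ hQP, vecMul_vecMul, ← Matrix.mul_assoc, ← Matrix.mul_assoc, hPQ,
      Matrix.one_mul, ← vecMul_vecMul, hp, vecMul_vecMul, hQP, vecMul_one]
  · rw [aeval_conj hPQ hQP, ← htr p, Matrix.mul_assoc, Matrix.mul_assoc, trace_mul_comm]
    simp only [Matrix.mul_assoc]

end Conj

/-- `A` has a trace-zero regular factor whose centralizer is not contained in the trace-zero
matrices. The last condition makes the factor regular in `sl_n`, and lets one correct the trace of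
the other factor. -/
def HasSlRegularFactor (A : Matrix ι ι R) : Prop :=
  ∃ M Z, IsRegularFactor M A ∧ M.trace = 0 ∧ Commute M Z ∧ Z.trace ≠ 0

theorem IsSimilar.hasSlRegularFactor {A : Matrix ι ι R} {B : Matrix κ κ R} (h : IsSimilar A B)
    (hB : HasSlRegularFactor B) : HasSlRegularFactor A := by
  obtain ⟨P, Q, hPQ, hQP, rfl⟩ := h
  obtain ⟨M, Z, hM, hMtr, hMZ, hZtr⟩ := hB
  have trace_conj (N : Matrix κ κ R) : (Q * N * P).trace = N.trace := by
    rw [trace_mul_comm, ← Matrix.mul_assoc, hPQ, Matrix.one_mul]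
  have mul_conj (N N' : Matrix κ κ R) : Q * N * P * (Q * N' * P) = Q * (N * N') * P := by
    rw [Matrix.mul_assoc, ← Matrix.mul_assoc P, ← Matrix.mul_assoc P, hPQ, Matrix.one_mul]
    simp only [Matrix.mul_assoc]
  refine ⟨Q * M * P, Q * Z * P, hM.conj hPQ hQP, by rw [trace_conj, hMtr], ?_,
    by rwa [trace_conj]⟩
  rw [commute_iff_eq, mul_conj, mul_conj, hMZ.eq]

/-! ### Block sums -/

omit [DecidableEq ι] [DecidableEq κ] in
theorem trace_fromBlocks (A : Matrix ι ι R) (U : Matrix ι κ R) (V : Matrix κ ι R)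
    (D : Matrix κ κ R) : (fromBlocks A U V D).trace = A.trace + D.trace := by
  simp [trace, Fintype.sum_sum_type]

theorem aeval_fromBlocks (S : Matrix ι ι R) (M : Matrix κ κ R) (p : R[X]) :
    aeval (fromBlocks S 0 0 M) p = fromBlocks (aeval S p) 0 0 (aeval M p) := by
  induction p using Polynomial.induction_on' with
  | add p q hp hq => simp [hp, hq, fromBlocks_add]
  | monomial n a =>
    simp [aeval_monomial, Algebra.algebraMap_eq_smul_one, fromBlocks_diagonal_pow,
      fromBlocks_smul]

theorem IsRegularFactor.fromBlocks {S A : Matrix ι ι R} {M D : Matrix κ κ R}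
    (hS : IsRegularFactor S A) (hM : IsRegularFactor M D) {p q : R[X]} (hp : aeval S p = 0)
    (hq : aeval M q = 0) (hpq : IsCoprime p q) (U : Matrix ι κ R) (V : Matrix κ ι R) :
    IsRegularFactor (fromBlocks S 0 0 M) (fromBlocks A U V D) := by
  obtain ⟨⟨v, hv⟩, hSA⟩ := hS
  obtain ⟨⟨w, hw⟩, hMD⟩ := hM
  refine ⟨⟨Sum.elim v w, fun u => ?_⟩, fun f => ?_⟩
  · obtain ⟨a, b, hab⟩ := hpq
    obtain ⟨f, hf⟩ := hv (u ∘ Sum.inl)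
    obtain ⟨g, hg⟩ := hw (u ∘ Sum.inr)
    beta_reduce at hf hg
    have hSb : aeval S b * aeval S q = 1 := by simpa [hp] using congrArg (aeval S) hab
    have hMa : aeval M a * aeval M p = 1 := by simpa [hq] using congrArg (aeval M) hab
    refine ⟨b * q * f + a * p * g, ?_⟩
    simp [aeval_fromBlocks, vecMul_fromBlocks, hp, hq, hSb, hMa, hf, hg]
  · simp [aeval_fromBlocks, fromBlocks_multiply, trace_fromBlocks, hSA, hMD]

/-! ### Alternating bidiagonal matrices -/

/-- The matrices supported on the superdiagonals of index at least `k`. -/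
def upperBand (R : Type*) [CommRing R] (m k : ℕ) : Submodule R (Matrix (Fin m) (Fin m) R) where
  carrier := {Z | ∀ i j : Fin m, (j : ℕ) < i + k → Z i j = 0}
  add_mem' hY hZ i j hij := by rw [Matrix.add_apply, hY i j hij, hZ i j hij, add_zero]
  zero_mem' _ _ _ := rfl
  smul_mem' c Z hZ i j hij := by rw [Matrix.smul_apply, hZ i j hij, smul_zero]

theorem mul_mem_upperBand {m k l : ℕ} {Y Z : Matrix (Fin m) (Fin m) R} (hY : Y ∈ upperBand R m k)
    (hZ : Z ∈ upperBand R m l) : Y * Z ∈ upperBand R m (k + l) := by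
  intro i j hij
  rw [mul_apply]
  refine Finset.sum_eq_zero fun r _ => ?_
  rcases lt_or_ge (r : ℕ) (i + k) with hr | hr
  · rw [hY i r hr, zero_mul]
  · rw [hZ r j (by omega), mul_zero]

theorem pow_mem_upperBand {m k : ℕ} {Z : Matrix (Fin m) (Fin m) R} (hZ : Z ∈ upperBand R m k) :
    ∀ n, Z ^ n ∈ upperBand R m (n * k)
  | 0 => fun i j hij => one_apply_ne (by rintro rfl; simp at hij)
  | n + 1 => by
    rw [pow_succ, Nat.succ_mul]
    exact mul_mem_upperBand (pow_mem_upperBand hZ n) hZ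

theorem eq_zero_of_mem_upperBand {m k : ℕ} (hmk : m ≤ k) {Z : Matrix (Fin m) (Fin m) R}
    (hZ : Z ∈ upperBand R m k) : Z = 0 :=
  ext fun i j => hZ i j (by omega)

/-- An upper Hessenberg matrix: the entries below the first subdiagonal vanish. -/
def IsHessenberg {m : ℕ} (H : Matrix (Fin m) (Fin m) R) : Prop :=
  ∀ i j : Fin m, (j : ℕ) + 1 < i → H i j = 0

theorem IsHessenberg.trace_mul_eq_zero {m : ℕ} {Z H : Matrix (Fin m) (Fin m) R}
    (hH : IsHessenberg H) (hZ : Z ∈ upperBand R m 2) : (Z * H).trace = 0 := by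
  simp only [trace, diag_apply, mul_apply]
  refine Finset.sum_eq_zero fun i _ => Finset.sum_eq_zero fun j _ => ?_
  rcases lt_or_ge (j : ℕ) (i + 2) with hj | hj
  · rw [hZ i j hj, zero_mul]
  · rw [hH j i (by omega), mul_zero]

/-- The matrix with ones on the first superdiagonal and zeros elsewhere. -/
def upperShift (R : Type*) [CommRing R] (m : ℕ) : Matrix (Fin m) (Fin m) R :=
  of fun i j => if (j : ℕ) = i + 1 then 1 else 0

theorem upperShift_mem_upperBand (m : ℕ) : upperShift R m ∈ upperBand R m 1 :=
  fun _ _ hij => if_neg hij.ne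

/-- The upper bidiagonal matrix with diagonal entries `d 0, …, d (m - 1)` and ones above the
diagonal. -/
def bidiag (d : ℕ → R) (m : ℕ) : Matrix (Fin m) (Fin m) R :=
  diagonal (fun i : Fin m => d i) + upperShift R m

theorem trace_bidiag (d : ℕ → R) (m : ℕ) : (bidiag d m).trace = ∑ i ∈ Finset.range m, d i := by
  simp [bidiag, upperShift, trace, Finset.sum_range]

theorem bidiag_castSucc (d : ℕ → R) {m : ℕ} (i : Fin m) :
    bidiag d (m + 1) i.castSucc = d i • Pi.single i.castSucc 1 + Pi.single i.succ 1 := by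
  ext j
  simp [bidiag, upperShift, diagonal_apply, Pi.single_apply, Fin.ext_iff, eq_comm]

theorem exists_isCyclicVector_bidiag (d : ℕ → R) :
    ∀ m, ∃ v, IsCyclicVector (bidiag d m) v
  | 0 => ⟨0, fun _ => ⟨0, Subsingleton.elim _ _⟩⟩
  | m + 1 => by
    let q (i : ℕ) : R[X] := ∏ j ∈ Finset.range i, (X - C (d j))
    have hq (i : Fin (m + 1)) :
        Pi.single 0 1 ᵥ* aeval (bidiag d (m + 1)) (q i) = Pi.single i 1 := by
      induction i using Fin.induction with
      | zero => simp [q]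
      | succ i ih =>
        rw [Fin.val_castSucc] at ih
        rw [Fin.val_succ, show q (i + 1) = q i * (X - C (d i)) from
          Finset.prod_range_succ .., map_mul, ← vecMul_vecMul, ih]
        simp [vecMul_sub, Algebra.algebraMap_eq_smul_one, vecMul_smul, bidiag_castSucc, row]
    refine ⟨Pi.single 0 1, fun w => ⟨∑ i : Fin (m + 1), C (w i) * q i, ?_⟩⟩
    simp [vecMul_sum, Algebra.algebraMap_eq_smul_one, vecMul_smul, hq, ← pi_eq_sum_univ']

/-- The sequence `e, 1 - e, e, 1 - e, …`. -/
def altSeq (e : R) : ℕ → R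
  | 0 => e
  | n + 1 => 1 - altSeq e n

theorem altSeq_add_altSeq_succ (e : R) (n : ℕ) : altSeq e n + altSeq e (n + 1) = 1 :=
  add_sub_cancel _ _

theorem altSeq_two_mul (e : R) : ∀ n, altSeq e (2 * n) = e
  | 0 => rfl
  | n + 1 => by
    rw [show 2 * (n + 1) = 2 * n + 1 + 1 by ring, altSeq, altSeq, altSeq_two_mul e n,
      sub_sub_cancel]

theorem isIdempotentElem_altSeq {e : R} (he : IsIdempotentElem e) :
    ∀ n, IsIdempotentElem (altSeq e n)
  | 0 => he
  | n + 1 => (isIdempotentElem_altSeq he n).one_sub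

theorem sum_range_two_mul_altSeq (e : R) (n : ℕ) :
    ∑ i ∈ Finset.range (2 * n), altSeq e i = n := by
  induction n with
  | zero => simp
  | succ n ih =>
    rw [show 2 * (n + 1) = 2 * n + 1 + 1 by ring, Finset.sum_range_succ, Finset.sum_range_succ, ih,
      add_assoc, altSeq_add_altSeq_succ, Nat.cast_succ]

theorem sum_range_two_mul_add_one_altSeq (e : R) (n : ℕ) :
    ∑ i ∈ Finset.range (2 * n + 1), altSeq e i = n + e := by
  rw [Finset.sum_range_succ, sum_range_two_mul_altSeq, altSeq_two_mul]

section AltBidiag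

variable {e : R} (he : IsIdempotentElem e) (m : ℕ)

include he

theorem bidiag_altSeq_sq_sub_self :
    bidiag (altSeq e) m ^ 2 - bidiag (altSeq e) m = upperShift R m ^ 2 := by
  set D : Matrix (Fin m) (Fin m) R := diagonal fun i => altSeq e i with hD
  have hDD : D * D = D := by
    rw [hD, diagonal_mul_diagonal]
    exact congrArg diagonal (funext fun i => isIdempotentElem_altSeq he i)
  have hDN : D * upperShift R m + upperShift R m * D = upperShift R m := by
    ext i j
    by_cases hij : (j : ℕ) = i + 1
    · simp [hD, upperShift, hij, altSeq_add_altSeq_succ]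
    · simp [hD, upperShift, hij]
  calc bidiag (altSeq e) m ^ 2 - bidiag (altSeq e) m
      = D * D + (D * upperShift R m + upperShift R m * D) + upperShift R m ^ 2
          - (D + upperShift R m) := by rw [bidiag, ← hD]; noncomm_ring
    _ = upperShift R m ^ 2 := by rw [hDD, hDN]; abel

theorem bidiag_altSeq_sq_sub_self_mem :
    bidiag (altSeq e) m ^ 2 - bidiag (altSeq e) m ∈ upperBand R m 2 := by
  rw [bidiag_altSeq_sq_sub_self he]
  exact pow_mem_upperBand (upperShift_mem_upperBand m) 2

theorem aeval_bidiag_altSeq_eq_zero :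
    aeval (bidiag (altSeq e) m) ((X ^ 2 - X) ^ m : R[X]) = 0 := by
  rw [map_pow, map_sub, map_pow, aeval_X]
  exact eq_zero_of_mem_upperBand (by omega)
    (pow_mem_upperBand (bidiag_altSeq_sq_sub_self_mem he m) m)

theorem bidiag_altSeq_pow_succ_sub_self_mem (k : ℕ) :
    bidiag (altSeq e) m ^ (k + 1) - bidiag (altSeq e) m ∈ upperBand R m 2 := by
  set M := bidiag (altSeq e) m
  induction k with
  | zero => simp
  | succ k ih =>
    have hM : M ∈ upperBand R m 0 := fun i j hij => by
      have h₁ : i ≠ j := by rintro rfl; simp at hij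
      have h₂ : (j : ℕ) ≠ i + 1 := by omega
      simp [M, bidiag, upperShift, h₁, h₂]
    have h : M ^ (k + 1 + 1) - M = M * (M ^ (k + 1) - M) + (M ^ 2 - M) := by
      rw [pow_succ' M (k + 1)]; noncomm_ring
    rw [h]
    exact add_mem (by simpa using mul_mem_upperBand hM ih) (bidiag_altSeq_sq_sub_self_mem he m)

variable {m}

/-- Modulo `upperBand R m 2`, which is orthogonal to Hessenberg matrices, all positive powers of an
alternating bidiagonal matrix agree, so that only two trace conditions remain. -/
theorem isRegularFactor_bidiag_altSeq {H : Matrix (Fin m) (Fin m) R} (hH : IsHessenberg H)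
    (htr : H.trace = 0) (hmul : (bidiag (altSeq e) m * H).trace = 0) :
    IsRegularFactor (bidiag (altSeq e) m) H := by
  refine ⟨exists_isCyclicVector_bidiag _ m, trace_aeval_mul_eq_zero fun k _ => ?_⟩
  cases k with
  | zero => simpa using htr
  | succ k =>
    have h := hH.trace_mul_eq_zero (bidiag_altSeq_pow_succ_sub_self_mem he m k)
    rwa [Matrix.sub_mul, trace_sub, hmul, sub_zero] at h

end AltBidiag

/-! ### Hessenberg form -/

theorem exists_notMem_span_mem_span_insert {V : Type*} [AddCommGroup V] [Module K V] {s : Set V}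
    (hs : Submodule.span K s ≠ ⊤) (u : V) :
    ∃ w ∉ Submodule.span K s, u ∈ Submodule.span K (insert w s) := by
  by_cases hu : u ∈ Submodule.span K s
  · obtain ⟨w, -, hw⟩ := SetLike.exists_of_lt hs.lt_top
    exact ⟨w, hw, Submodule.span_mono (Set.subset_insert _ _) hu⟩
  · exact ⟨u, hu, Submodule.subset_span (Set.mem_insert _ _)⟩

theorem exists_linearIndependent_hessenberg {V : Type*} [AddCommGroup V] [Module K V]
    (f : V →ₗ[K] V) {v : V} (hv : LinearIndependent K ![v, f v]) {m : ℕ}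
    (hm : m + 2 ≤ finrank K V) :
    ∃ b : Fin (m + 2) → V, LinearIndependent K b ∧ f (b 0) = b 1 ∧
      ∀ i : Fin (m + 1), f (b i.castSucc) ∈ Submodule.span K (b '' Set.Iic i.succ) := by
  induction m with
  | zero =>
    refine ⟨_, hv, rfl, fun i => ?_⟩
    obtain rfl : i = 0 := Subsingleton.elim (α := Fin 1) i 0
    exact Submodule.subset_span ⟨1, Set.mem_Iic.2 le_rfl, rfl⟩
  | succ m ih =>
    obtain ⟨b, hb, hb1, hbf⟩ := ih (by omega)
    have hspan : Submodule.span K (Set.range b) ≠ ⊤ := fun h => by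
      have hcard := finrank_span_eq_card hb
      rw [h, finrank_top, Fintype.card_fin] at hcard
      omega
    obtain ⟨w, hw, hfw⟩ := exists_notMem_span_mem_span_insert hspan (f (b (Fin.last _)))
    let b' : Fin (m + 3) → V := Fin.snoc b w
    have hb' (i : Fin (m + 2)) : b' i.castSucc = b i := Fin.snoc_castSucc ..
    refine ⟨b', linearIndependent_finSnoc.2 ⟨hb, hw⟩, ?_, fun i => ?_⟩
    · rw [← Fin.castSucc_zero, ← Fin.castSucc_one, hb', hb', hb1]
    · rw [hb']
      cases i using Fin.lastCases with
      | last =>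
        refine Submodule.span_mono ?_ hfw
        rintro _ (rfl | ⟨l, rfl⟩)
        · exact ⟨Fin.last _, Set.mem_Iic.2 le_rfl, Fin.snoc_last (α := fun _ => V) _ _⟩
        · exact ⟨l.castSucc, Set.mem_Iic.2 (Fin.le_last _), hb' l⟩
      | cast i =>
        refine Submodule.span_mono ?_ (hbf i)
        rintro _ ⟨l, hl, rfl⟩
        exact ⟨l.castSucc, Fin.castSucc_le_castSucc_iff.2 hl, hb' l⟩

theorem isSimilar_toMatrix {V : Type*} [AddCommGroup V] [Module R V] (b : Basis ι R V)
    (b' : Basis κ R V) (f : V →ₗ[R] V) :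
    IsSimilar (LinearMap.toMatrix b b f) (LinearMap.toMatrix b' b' f) :=
  ⟨b'.toMatrix b, b.toMatrix b', b'.toMatrix_mul_toMatrix_flip b, b.toMatrix_mul_toMatrix_flip b',
    basis_toMatrix_mul_linearMap_toMatrix_mul_basis_toMatrix ..⟩

theorem exists_linearIndependent_mulVec {A : Matrix ι ι K} (hA : A ∉ Set.range (scalar ι)) :
    ∃ v, LinearIndependent K ![v, A *ᵥ v] := by
  by_contra! h
  obtain ⟨c, hc⟩ := LinearMap.exists_eq_smul_id_of_forall_notLinearIndependent (f := toLin' A) h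
  exact hA ⟨c, toLin'.injective (by
    rw [hc, scalar_apply, ← smul_one_eq_diagonal, map_smul, toLin'_one]; rfl)⟩

theorem exists_isSimilar_isHessenberg {m : ℕ} {A : Matrix (Fin (m + 2)) (Fin (m + 2)) K}
    (hA : A ∉ Set.range (scalar (Fin (m + 2)))) :
    ∃ H : Matrix (Fin (m + 2)) (Fin (m + 2)) K, IsSimilar A H ∧ IsHessenberg H ∧ H 1 0 ≠ 0 := by
  obtain ⟨v, hv⟩ := exists_linearIndependent_mulVec hA
  obtain ⟨u, hu, hu1, huA⟩ := exists_linearIndependent_hessenberg (m := m) (toLin' A) hv (by simp)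
  let b := basisOfLinearIndependentOfCardEqFinrank hu (by simp)
  have hb : ⇑b = u := coe_basisOfLinearIndependentOfCardEqFinrank ..
  rw [← hb] at hu1 huA
  refine ⟨LinearMap.toMatrix b b (toLin' A), ?_, fun i j hij => ?_, ?_⟩
  · simpa [LinearMap.toMatrix_eq_toMatrix'] using
      isSimilar_toMatrix (Pi.basisFun K (Fin (m + 2))) b (toLin' A)
  · obtain ⟨j, rfl⟩ := Fin.exists_castSucc_eq.2 (show j ≠ Fin.last _ from fun h => by
      rw [h, Fin.val_last] at hij
      omega)
    rw [LinearMap.toMatrix_apply]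
    by_contra hne
    have hi : i ≤ j.succ := b.mem_span_image.1 (huA j) (Finsupp.mem_support_iff.2 hne)
    rw [Fin.le_iff_val_le_val, Fin.val_succ] at hi
    rw [Fin.val_castSucc] at hij
    omega
  · simp [LinearMap.toMatrix_apply, hu1]

theorem trace_mul_transvectionConj (i j : ι) (t : R) (M A : Matrix ι ι R) :
    (M * transvectionConj i j t A).trace = (transvectionConj i j (-t) M * A).trace := by
  rw [transvectionConj, transvectionConj, neg_neg, ← Matrix.mul_assoc, ← Matrix.mul_assoc,
    trace_mul_comm]
  simp only [Matrix.mul_assoc]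

theorem IsHessenberg.transvectionConj_zero_one {m : ℕ} {H : Matrix (Fin (m + 2)) (Fin (m + 2)) R}
    (hH : IsHessenberg H) (t : R) : IsHessenberg (transvectionConj 0 1 t H) := by
  intro i j hij
  have hi : i ≠ 0 := by rintro rfl; simp at hij
  rw [transvectionConj_apply, hH i j hij, if_neg hi, if_neg hi]
  split_ifs with hj
  · rw [hH i 0 (by rw [hj, Fin.val_one] at hij; rw [Fin.val_zero]; omega)]; simp
  · simp

theorem IsHessenberg.trace_bidiag_mul_transvectionConj {m : ℕ}
    {H : Matrix (Fin (m + 2)) (Fin (m + 2)) R} (hH : IsHessenberg H) (d : ℕ → R) (t : R) :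
    (bidiag d (m + 2) * transvectionConj 0 1 t H).trace =
      (bidiag d (m + 2) * H).trace + t * (d 0 - d 1) * H 1 0 := by
  set M := bidiag d (m + 2)
  have hband : transvectionConj 0 1 (-t) M - M - single 0 1 (t * (d 0 - d 1)) ∈
      upperBand R (m + 2) 2 := by
    intro i j hij
    have hM0 (i : Fin (m + 2)) (hi : i ≠ 0) : M i 0 = 0 := by simp [M, bidiag, upperShift, hi]
    have hM00 : M 0 0 = d 0 := by simp [M, bidiag, upperShift]
    have hM11 : M 1 1 = d 1 := by simp [M, bidiag, upperShift]
    rw [Matrix.sub_apply, Matrix.sub_apply, transvectionConj_apply, hM0 1 one_ne_zero]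
    obtain rfl | hi := eq_or_ne i 0
    · rw [Fin.val_zero, zero_add] at hij
      obtain rfl | rfl : j = 0 ∨ j = 1 := by
        rw [Fin.ext_iff, Fin.ext_iff, Fin.val_zero, Fin.val_one]
        omega
      · simp [hM0]
      · rw [hM00, hM11, if_pos rfl, if_pos rfl, if_pos rfl, single_apply_same]
        ring
    · simp [hi, hi.symm, hM0 i hi]
  have htr := hH.trace_mul_eq_zero hband
  rw [Matrix.sub_mul, Matrix.sub_mul, trace_sub, trace_sub, trace_single_mul,
    ← trace_mul_transvectionConj] at htr
  linear_combination htr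

theorem exists_isSimilar_isHessenberg_trace_eq_zero {e : K} (he : IsIdempotentElem e) {m : ℕ}
    {A : Matrix (Fin m) (Fin m) K} (hA : A ∉ Set.range (scalar (Fin m))) :
    ∃ H, IsSimilar A H ∧ IsHessenberg H ∧ (bidiag (altSeq e) m * H).trace = 0 := by
  match m with
  | 0 => exact absurd (mem_range_scalar_of_commute_single Subsingleton.pairwise) hA
  | 1 => exact absurd (mem_range_scalar_of_commute_single Subsingleton.pairwise) hA
  | m + 2 =>
    obtain ⟨H, hAH, hH, hH10⟩ := exists_isSimilar_isHessenberg hA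
    have hd : altSeq e 0 - altSeq e 1 ≠ 0 := by
      rcases IsIdempotentElem.iff_eq_zero_or_one.1 he with rfl | rfl <;> simp [altSeq]
    refine ⟨_, hAH.trans (isSimilar_transvectionConj zero_ne_one _ H),
      hH.transvectionConj_zero_one
        (-(bidiag (altSeq e) (m + 2) * H).trace / ((altSeq e 0 - altSeq e 1) * H 1 0)), ?_⟩
    rw [hH.trace_bidiag_mul_transvectionConj, mul_assoc,
      div_mul_cancel₀ _ (mul_ne_zero hd hH10), add_neg_cancel]

theorem exists_isRegularFactor_trace_eq {e : K} (he : IsIdempotentElem e) {m : ℕ}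
    {A : Matrix (Fin m) (Fin m) K} (hA : A = 0 ∨ A ∉ Set.range (scalar (Fin m)))
    (htr : A.trace = 0) :
    ∃ M, IsRegularFactor M A ∧ M.trace = ∑ i ∈ Finset.range m, altSeq e i ∧
      aeval M ((X ^ 2 - X) ^ m : K[X]) = 0 := by
  obtain ⟨H, hAH, hH, hmul⟩ : ∃ H, IsSimilar A H ∧ IsHessenberg H ∧
      (bidiag (altSeq e) m * H).trace = 0 := by
    rcases hA with rfl | hA
    · exact ⟨0, .refl _, fun _ _ _ => rfl, by simp⟩
    · exact exists_isSimilar_isHessenberg_trace_eq_zero he hA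
  have hHtr := hAH.trace_eq.trans htr
  obtain ⟨P, Q, hPQ, hQP, rfl⟩ := hAH
  refine ⟨_, (isRegularFactor_bidiag_altSeq he hH hHtr hmul).conj hPQ hQP, ?_, ?_⟩
  · rw [trace_mul_comm, ← Matrix.mul_assoc, hPQ, Matrix.one_mul, trace_bidiag]
  · rw [aeval_conj hPQ hQP, aeval_bidiag_altSeq_eq_zero he, Matrix.mul_zero, Matrix.zero_mul]

/-! ### Prescribing the diagonal -/

theorem exists_isSimilar_corner_eq {n : ℕ} {A : Matrix (Fin (n + 2)) (Fin (n + 2)) K}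
    (hA : A ∉ Set.range (scalar (Fin (n + 2)))) (c : K) :
    ∃ B : Matrix (Fin (n + 2)) (Fin (n + 2)) K, IsSimilar A B ∧ B 0 0 = c ∧ B 1 0 ≠ 0 ∧
      ∀ i, 1 < i → B i 0 = 0 := by
  obtain ⟨H, hAH, hH, hH10⟩ := exists_isSimilar_isHessenberg hA
  refine ⟨_, hAH.trans (isSimilar_transvectionConj zero_ne_one ((c - H 0 0) / H 1 0) H), ?_, ?_,
    fun i hi => ?_⟩
  · simp [transvectionConj_apply, div_mul_cancel₀ _ hH10]
  · simpa [transvectionConj_apply] using hH10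
  · have hi' : (0 : Fin (n + 2)).val + 1 < i := by simpa [Fin.lt_def] using hi
    simpa [transvectionConj_apply, (zero_lt_one.trans hi).ne'] using hH i 0 hi'

theorem exists_isSimilar_corner_eq_submatrix_notMem {n : ℕ}
    {A : Matrix (Fin (n + 3)) (Fin (n + 3)) K} (hA : A ∉ Set.range (scalar (Fin (n + 3)))) (c : K) :
    ∃ B : Matrix (Fin (n + 3)) (Fin (n + 3)) K, IsSimilar A B ∧ B 0 0 = c ∧
      B.submatrix Fin.succ Fin.succ ∉ Set.range (scalar (Fin (n + 2))) := by
  obtain ⟨B, hAB, hB00, hB10, hB⟩ := exists_isSimilar_corner_eq hA c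
  by_cases hscalar : B.submatrix Fin.succ Fin.succ ∈ Set.range (scalar (Fin (n + 2)))
  swap
  · exact ⟨B, hAB, hB00, hscalar⟩
  obtain ⟨b, hb⟩ := hscalar
  have h20 : (2 : Fin (n + 3)) ≠ 0 := Fin.succ_ne_zero (1 : Fin (n + 2))
  have h12 : (1 : Fin (n + 3)) < 2 := Fin.succ_lt_succ_iff.2 (zero_lt_one (α := Fin (n + 2)))
  refine ⟨transvectionConj 0 2 1 B, hAB.trans (isSimilar_transvectionConj h20.symm 1 B), ?_, ?_⟩
  · simp [transvectionConj_apply, hB00, hB 2 h12, h20.symm]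
  · rintro ⟨b', hb'⟩
    have hB12 : B 1 2 = 0 := by simpa using (congrFun₂ hb 0 1).symm
    have hB12' : transvectionConj 0 2 1 B 1 2 = 0 := by simpa using (congrFun₂ hb' 0 1).symm
    simp [transvectionConj_apply, hB12, hB10] at hB12'

theorem IsSimilar.exists_submatrix_succ_eq {n : ℕ} {A : Matrix (Fin (n + 1)) (Fin (n + 1)) R}
    {B : Matrix (Fin n) (Fin n) R} (h : IsSimilar (A.submatrix Fin.succ Fin.succ) B) :
    ∃ A' : Matrix (Fin (n + 1)) (Fin (n + 1)) R, IsSimilar A A' ∧ A' 0 0 = A 0 0 ∧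
      A'.submatrix Fin.succ Fin.succ = B := by
  let e : Fin n ⊕ Unit ≃ Fin (n + 1) :=
    ((finSuccEquiv n).trans (Equiv.optionEquivSumPUnit (Fin n))).symm
  have he (i : Fin n) : e.symm i.succ = Sum.inl i := by simp [e]
  have hA := IsSimilar.submatrix A e
  rw [← fromBlocks_toBlocks (A.submatrix e e)] at hA
  obtain ⟨U, V, hUV⟩ := IsSimilar.fromBlocks (A := (A.submatrix e e).toBlocks₁₁) h
    (A.submatrix e e).toBlocks₁₂ (A.submatrix e e).toBlocks₂₁ (A.submatrix e e).toBlocks₂₂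
  refine ⟨_, (hA.trans hUV).trans (IsSimilar.submatrix _ e.symm), ?_, ?_⟩
  · simp [toBlocks₂₂, e]
  · ext i j
    simp [he]

/-- Fillmore's theorem. -/
theorem exists_isSimilar_diag_eq {n : ℕ} {A : Matrix (Fin (n + 2)) (Fin (n + 2)) K}
    (hA : A ∉ Set.range (scalar (Fin (n + 2)))) (d : Fin (n + 2) → K) (hd : A.trace = ∑ i, d i) :
    ∃ B, IsSimilar A B ∧ B.diag = d := by
  induction n with
  | zero =>
    obtain ⟨B, hAB, hB00, -⟩ := exists_isSimilar_corner_eq hA (d 0)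
    have htr := hAB.trace_eq.trans hd
    rw [trace_fin_two, Fin.sum_univ_two, hB00, add_right_inj] at htr
    exact ⟨B, hAB, funext (Fin.forall_fin_two.2 ⟨hB00, htr⟩)⟩
  | succ n ih =>
    obtain ⟨B, hAB, hB00, hB⟩ := exists_isSimilar_corner_eq_submatrix_notMem hA (d 0)
    have htr := hAB.trace_eq.trans hd
    rw [trace, Fin.sum_univ_succ, Fin.sum_univ_succ d, diag_apply, hB00, add_right_inj] at htr
    obtain ⟨D, hBD, hD⟩ := ih hB (fun i => d i.succ) htr
    obtain ⟨B', hBB', hB'00, rfl⟩ := hBD.exists_submatrix_succ_eq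
    exact ⟨B', hAB.trans hBB', funext (Fin.cases (hB'00.trans hB00) (congrFun hD))⟩

/-! ### Balanced pairs and triangles of entries -/

theorem exists_path_of_total {α : Type*} {r : α → α → Prop} (hr : ∀ i j, i ≠ j → r i j ∨ r j i)
    {x y z : α} (hxy : x ≠ y) (hxz : x ≠ z) (hyz : y ≠ z) :
    ∃ i j k, i ≠ j ∧ i ≠ k ∧ j ≠ k ∧ r i j ∧ r j k := by
  wlog h : r x y generalizing x y
  · exact this hxy.symm hyz hxz ((hr x y hxy).resolve_left h)
  rcases hr y z hyz with hyz' | hzy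
  · exact ⟨x, y, z, hxy, hxz, hyz, h, hyz'⟩
  · rcases hr x z hxz with hxz' | hzx
    · exact ⟨x, z, y, hxz, hxy, hyz.symm, hxz', hzy⟩
    · exact ⟨z, x, y, hxz.symm, hyz.symm, hxy, hzx, h⟩

/-- If every pair of opposite entries has exactly one zero, the nonzero entries form a tournament,
and a transvection along a directed path of length two balances some pair. -/
theorem exists_isSimilar_diag_zero_balanced {A : Matrix ι ι K} (hA : A.diag = 0)
    (hι : 2 < Fintype.card ι) :
    ∃ B : Matrix ι ι K, IsSimilar A B ∧ B.diag = 0 ∧ ∃ i j, i ≠ j ∧ (B i j = 0 ↔ B j i = 0) := by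
  by_cases hbal : ∃ i j, i ≠ j ∧ (A i j = 0 ↔ A j i = 0)
  · exact ⟨A, .refl A, hA, hbal⟩
  have hA' (i : ι) : A i i = 0 := congrFun hA i
  have htot (i j : ι) (hij : i ≠ j) : A i j ≠ 0 ∨ A j i ≠ 0 := by
    by_contra! h
    exact hbal ⟨i, j, hij, by simp [h]⟩
  have hanti {i j : ι} (hij : i ≠ j) (h : A i j ≠ 0) : A j i = 0 := by
    by_contra h'
    exact hbal ⟨i, j, hij, by simp [h, h']⟩
  obtain ⟨x, y, z, hxy, hxz, hyz⟩ := Fintype.two_lt_card_iff.1 hι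
  obtain ⟨i, j, k, hij, hik, hjk, hAij, hAjk⟩ := exists_path_of_total htot hxy hxz hyz
  have hdiag (t : K) : (transvectionConj i j t A).diag = 0 := by
    ext p
    by_cases hp : p = i <;> by_cases hq : p = j <;>
      simp_all [transvectionConj_apply]
  by_cases hki : A k i = 0
  · refine ⟨_, isSimilar_transvectionConj hij (-A i k / A j k) A, hdiag _, i, k, hik, ?_⟩
    simp [transvectionConj_apply, hki, hik.symm, hjk.symm, hij, div_mul_cancel₀ _ hAjk]
  · refine ⟨_, isSimilar_transvectionConj hij 1 A, hdiag _, j, k, hjk, ?_⟩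
    simp [transvectionConj_apply, hki, hAjk, hanti hjk hAjk, hik.symm, hjk.symm, hij.symm]

section Ramsey

open SimpleGraph

variable {V : Type*}

theorem not_cliqueFree_compl_of_three_le_degree {G : SimpleGraph V} {v : V}
    [Fintype (G.neighborSet v)] (hv : 3 ≤ G.degree v) (hG : G.CliqueFree 3) :
    ¬ Gᶜ.CliqueFree 3 := fun hG' => by
  refine hG'.mono hv (G.neighborFinset v) ⟨?_, rfl⟩
  rw [coe_neighborFinset, isClique_compl]
  exact isIndepSet_neighborSet_of_triangleFree G hG v

theorem not_cliqueFree_three_or_compl [Fintype V] (hV : 6 ≤ Fintype.card V) (G : SimpleGraph V) :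
    ¬ G.CliqueFree 3 ∨ ¬ Gᶜ.CliqueFree 3 := by
  classical
  obtain ⟨v⟩ : Nonempty V := Fintype.card_pos_iff.1 (by omega)
  have hdeg := G.degree_compl v
  by_contra! ⟨hG, hG'⟩
  rcases le_or_gt 3 (G.degree v) with hv | hv
  · exact not_cliqueFree_compl_of_three_le_degree hv hG hG'
  · refine not_cliqueFree_compl_of_three_le_degree (G := Gᶜ) (v := v) (by omega) hG' ?_
    rwa [compl_compl]

end Ramsey

/-! ### Splitting off a small block -/

omit [DecidableEq ι] [DecidableEq κ] in
theorem exists_equiv_apply_inl_eq {e : κ → ι} (he : Function.Injective e) {m : ℕ}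
    (hm : Fintype.card κ + m = Fintype.card ι) :
    ∃ E : κ ⊕ Fin m ≃ ι, ∀ i, E (Sum.inl i) = e i := by
  classical
  have hcard : Fintype.card ((Set.range e)ᶜ : Set ι) = m := by
    rw [Fintype.card_compl_set, Set.card_range_of_injective he]
    omega
  exact ⟨(Equiv.sumCongr (Equiv.ofInjective e he) (Fintype.equivFinOfCardEq hcard).symm).trans
    (Equiv.Set.sumCompl (Set.range e)), fun i => by simp⟩

theorem eq_zero_or_notMem_range_scalar_of_diag_eq_zero {A : Matrix ι ι R} (hA : A.diag = 0) :
    A = 0 ∨ A ∉ Set.range (scalar ι) := by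
  refine or_iff_not_imp_right.2 fun h => ?_
  obtain ⟨c, rfl⟩ := not_not.1 h
  ext i j
  obtain rfl | hij := eq_or_ne i j
  · exact congrFun hA i
  · exact diagonal_apply_ne _ hij

theorem isCoprime_charpoly_X_sub_C {S : Matrix ι ι K} {c : K} (hS : (scalar ι c - S).det ≠ 0) :
    IsCoprime S.charpoly (X - C c) := by
  rw [isCoprime_comm, (irreducible_X_sub_C c).coprime_iff_not_dvd, dvd_iff_isRoot, IsRoot,
    eval_charpoly]
  exact hS

theorem isCoprime_charpoly_X_sq_sub_X_pow {S : Matrix ι ι K} (h₀ : S.det ≠ 0)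
    (h₁ : (1 - S).det ≠ 0) (m : ℕ) : IsCoprime S.charpoly ((X ^ 2 - X) ^ m) := by
  rw [show (X ^ 2 - X : K[X]) = (X - C 0) * (X - C 1) by rw [C_0, C_1]; ring]
  refine ((isCoprime_charpoly_X_sub_C ?_).mul_right (isCoprime_charpoly_X_sub_C ?_)).pow_right
  · simpa [det_neg] using h₀
  · simpa using h₁

/-- Completes a regular factor of a small diagonal block by an alternating one, whose spectrum lies
in `{0, 1}`; the determinant conditions keep the two spectra apart. -/
theorem hasSlRegularFactor_of_submatrix {A : Matrix ι ι K} (hA : A.diag = 0) {e : κ → ι}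
    (he : Function.Injective e) {m : ℕ} (hm : Fintype.card κ + m = Fintype.card ι)
    {S Z : Matrix κ κ K} (hS : IsRegularFactor S (A.submatrix e e)) (h₀ : S.det ≠ 0)
    (h₁ : (1 - S).det ≠ 0) (hSZ : Commute S Z) (hZ : Z.trace ≠ 0) {ε : K}
    (hε : IsIdempotentElem ε) (htr : S.trace + ∑ i ∈ Finset.range m, altSeq ε i = 0) :
    HasSlRegularFactor A := by
  obtain ⟨E, hE⟩ := exists_equiv_apply_inl_eq he hm
  refine (IsSimilar.submatrix A E).hasSlRegularFactor ?_
  rw [← fromBlocks_toBlocks (A.submatrix E E)]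
  have hAe : (A.submatrix E E).toBlocks₁₁ = A.submatrix e e := by
    ext i j
    simp [toBlocks₁₁, hE]
  have hdiag : (A.submatrix E E).toBlocks₂₂.diag = 0 := funext fun i => congrFun hA (E (Sum.inr i))
  obtain ⟨M, hM, hMtr, hMzero⟩ := exists_isRegularFactor_trace_eq hε
    (eq_zero_or_notMem_range_scalar_of_diag_eq_zero hdiag)
    (Finset.sum_eq_zero fun i _ => congrFun hdiag i)
  rw [hAe]
  refine ⟨fromBlocks S 0 0 M, fromBlocks Z 0 0 0, hS.fromBlocks hM (aeval_self_charpoly S) hMzero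
    (isCoprime_charpoly_X_sq_sub_X_pow h₀ h₁ m) _ _, ?_, ?_, ?_⟩
  · rw [trace_fromBlocks, hMtr, htr]
  · simp [commute_iff_eq, fromBlocks_multiply, hSZ.eq]
  · simpa [trace_fromBlocks] using hZ

theorem IsRegularFactor.of_isUnit_det {n : ℕ} {M A : Matrix (Fin n) (Fin n) R} {v : Fin n → R}
    (hv : IsUnit (of fun i : Fin n => v ᵥ* M ^ (i : ℕ)).det)
    (h : ∀ i < n, (M ^ i * A).trace = 0) : IsRegularFactor M A := by
  refine ⟨⟨v, fun w => ?_⟩, trace_aeval_mul_eq_zero (by simpa using h)⟩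
  obtain ⟨c, rfl⟩ := vecMul_surjective_iff_isUnit.2 ((isUnit_iff_isUnit_det _).2 hv) w
  refine ⟨∑ i : Fin n, C (c i) * X ^ (i : ℕ), ?_⟩
  beta_reduce
  rw [vecMul_eq_sum c]
  simp only [map_sum, map_mul, map_pow, aeval_C, aeval_X, Algebra.algebraMap_eq_smul_one,
    smul_one_mul, vecMul_sum, vecMul_smul]
  rfl

theorem isRegularFactor_fin_two {s t : K} (c : K) (hs : s ≠ 0) {A : Matrix (Fin 2) (Fin 2) K}
    (hA : A.diag = 0) (h : s * A 1 0 + t * A 0 1 = 0) : IsRegularFactor !![0, s; t, c] A := by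
  have h0 : A 0 0 = 0 := congrFun hA 0
  have h1 : A 1 1 = 0 := congrFun hA 1
  refine .of_isUnit_det (v := ![1, 0]) (by simp [det_fin_two, hs]) fun i hi => ?_
  interval_cases i
  · simp [trace_fin_two, h0, h1]
  · simpa [-cons_mul, trace_fin_two, mul_apply, h0, h1] using h

theorem isRegularFactor_fin_three {s t : K} (c : K) (hs : s ≠ 0) (ht : t ≠ 0)
    {A : Matrix (Fin 3) (Fin 3) K} (hA : A.diag = 0) (h : s * A 1 0 + t * A 0 1 = 0) :
    IsRegularFactor !![0, s, 0; t, c, 0; 0, 0, c] A := by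
  have h0 : A 0 0 = 0 := congrFun hA 0
  have h1 : A 1 1 = 0 := congrFun hA 1
  have h2 : A 2 2 = 0 := congrFun hA 2
  refine .of_isUnit_det (v := ![1, 0, 1]) ?_ fun i hi => ?_
  · have hdet : s * (c * c) - c * (s * c) - s * (s * t) = -(s * (s * t)) := by ring
    simp [det_fin_three, sq, hdet, hs, ht]
  · interval_cases i
    · simp [trace_fin_three, h0, h1, h2]
    · simp only [pow_one, trace_fin_three, mul_apply, Fin.sum_univ_three, of_apply, cons_val,
        h0, h1, h2]
      linear_combination h
    · simp only [sq, trace_fin_three, mul_apply, Fin.sum_univ_three, of_apply, cons_val,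
        h0, h1, h2]
      linear_combination c * h

theorem isRegularFactor_fin_three_of_charTwo [CharP K 2] {A : Matrix (Fin 3) (Fin 3) K}
    (hA : A.diag = 0) (h₁ : A 0 1 + A 1 0 = A 1 2 + A 2 1) (h₂ : A 0 2 + A 2 0 = A 1 2 + A 2 1) :
    IsRegularFactor !![0, 1, 0; 1, 0, 1; 0, 1, 1] A := by
  have h0 : A 0 0 = 0 := congrFun hA 0
  have h1 : A 1 1 = 0 := congrFun hA 1
  have h2 : A 2 2 = 0 := congrFun hA 2
  have h22 : (2 : K) = 0 := CharTwo.two_eq_zero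
  refine .of_isUnit_det (v := ![1, 0, 0]) ?_ fun i hi => ?_
  · simp [det_fin_three, sq]
  · interval_cases i
    · simp [trace_fin_three, h0, h1, h2]
    · simp only [pow_one, trace_fin_three, mul_apply, Fin.sum_univ_three, of_apply, cons_val,
        h0, h1, h2]
      linear_combination h₁ + (A 1 2 + A 2 1) * h22
    · simp only [sq, trace_fin_three, mul_apply, Fin.sum_univ_three, of_apply, cons_val,
        h0, h1, h2]
      linear_combination h₂ + (A 1 2 + A 2 1) * h22

/-! ### Non-scalar matrices -/

theorem aeval_add_smul_one (M : Matrix ι ι R) (c : R) (p : R[X]) :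
    aeval (M + c • 1) p = aeval M (p.comp (X + C c)) := by
  rw [aeval_comp, map_add, aeval_X, aeval_C, Algebra.algebraMap_eq_smul_one]

theorem IsRegularFactor.add_smul_one {M A : Matrix ι ι R} (h : IsRegularFactor M A) (c : R) :
    IsRegularFactor (M + c • 1) A := by
  obtain ⟨⟨v, hv⟩, htr⟩ := h
  refine ⟨⟨v, fun w => ?_⟩, fun p => ?_⟩
  · obtain ⟨p, hp⟩ := hv w
    refine ⟨p.comp (X - C c), ?_⟩
    beta_reduce at hp ⊢
    rw [aeval_add_smul_one, comp_assoc]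
    simpa using hp
  · rw [aeval_add_smul_one, htr]

theorem hasSlRegularFactor_of_card_ne_zero {n : ℕ} (hn : (n : K) ≠ 0)
    {A : Matrix (Fin n) (Fin n) K} (hA : A ∉ Set.range (scalar (Fin n))) (htr : A.trace = 0) :
    HasSlRegularFactor A := by
  obtain ⟨M, hM, -, -⟩ := exists_isRegularFactor_trace_eq .zero (.inr hA) htr
  refine ⟨_, 1, hM.add_smul_one (-(M.trace / n)), ?_, Commute.one_right _, by simpa using hn⟩
  simp [hn]

theorem hasSlRegularFactor_of_odd {n : ℕ} (hn : (n : K) = 0) (hodd : Odd n)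
    {A : Matrix (Fin n) (Fin n) K} (hA : A.diag = 0) : HasSlRegularFactor A := by
  obtain ⟨a, rfl⟩ := hodd
  push_cast at hn
  have h2 : (2 : K) ≠ 0 := fun h => by simp [h] at hn
  have hsub : A.submatrix ![0] ![0] = 0 := by
    ext i j
    simpa using congrFun hA 0
  have hhalf : (1 - 2⁻¹ : K) = 2⁻¹ := by field_simp; norm_num
  refine hasSlRegularFactor_of_submatrix hA (e := ![0]) (Function.injective_of_subsingleton _)
    (m := 2 * a) (by simp only [Fintype.card_fin]; omega) (S := !![2⁻¹]) (Z := !![2⁻¹]) ?_ ?_ ?_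
    (Commute.refl _) ?_ .zero ?_
  · rw [hsub]
    exact .of_isUnit_det (v := ![1]) (by simp) (by simp)
  · simpa using h2
  · simpa [hhalf] using h2
  · simpa [trace_fin_one] using h2
  · rw [sum_range_two_mul_altSeq, trace_fin_one_of]
    field_simp
    linear_combination hn

theorem exists_mul_add_mul_eq_zero {x y : K} (hxy : x = 0 ↔ y = 0) :
    ∃ s t : K, s ≠ 0 ∧ t ≠ 0 ∧ s * x + t * y = 0 := by
  by_cases hx : x = 0
  · exact ⟨1, 1, one_ne_zero, one_ne_zero, by simp [hx, hxy.1 hx]⟩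
  · exact ⟨y, -x, fun h => hx (hxy.2 h), neg_ne_zero.2 hx, by ring⟩

theorem hasSlRegularFactor_of_balanced {a : ℕ} (ha : (a : K) = -1)
    {A : Matrix (Fin (2 * a + 2)) (Fin (2 * a + 2)) K} (hA : A.diag = 0) {i j : Fin (2 * a + 2)}
    (hij : i ≠ j) (hAij : A i j = 0 ↔ A j i = 0) : HasSlRegularFactor A := by
  obtain ⟨s, t, hs, ht, hst⟩ := exists_mul_add_mul_eq_zero hAij.symm
  have he : Function.Injective ![i, j] := by
    simpa [Function.Injective, Fin.forall_fin_two, eq_comm] using hij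
  refine hasSlRegularFactor_of_submatrix hA he (m := 2 * a) (by simp only [Fintype.card_fin]; omega)
    (S := !![0, s; t, 1]) (Z := !![0, s; t, 1])
    (isRegularFactor_fin_two 1 hs (funext fun _ => congrFun hA _) (by simpa using hst)) ?_ ?_
    (Commute.refl _) ?_ .zero ?_
  · simp [det_fin_two, hs, ht]
  · simp [det_fin_two, hs, ht]
  · simp [trace_fin_two]
  · rw [sum_range_two_mul_altSeq, ha]
    simp [trace_fin_two]

omit [DecidableEq ι] in
theorem exists_triple_add_swap_eq (hK : ∀ c : K, c = 0 ∨ c = 1) (hι : 6 ≤ Fintype.card ι)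
    (A : Matrix ι ι K) :
    ∃ i j k, i ≠ j ∧ i ≠ k ∧ j ≠ k ∧ A i j + A j i = A j k + A k j ∧
      A i k + A k i = A j k + A k j := by
  classical
  have of_triangle {H : SimpleGraph ι} {r : K} (hH : ∀ {i j}, H.Adj i j → A i j + A j i = r)
      (h : ¬ H.CliqueFree 3) : ∃ i j k, i ≠ j ∧ i ≠ k ∧ j ≠ k ∧
        A i j + A j i = A j k + A k j ∧ A i k + A k i = A j k + A k j := by
    simp only [SimpleGraph.CliqueFree, not_forall, not_not, SimpleGraph.is3Clique_iff] at h
    obtain ⟨-, i, j, k, hij, hik, hjk, -⟩ := h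
    exact ⟨i, j, k, hij.ne, hik.ne, hjk.ne, by rw [hH hij, hH hjk], by rw [hH hik, hH hjk]⟩
  let G : SimpleGraph ι := .fromRel fun i j => A i j + A j i = 0
  have hG {i j : ι} (h : G.Adj i j) : A i j + A j i = 0 := h.2.elim id fun h' => by rwa [add_comm]
  have hGc {i j : ι} (h : Gᶜ.Adj i j) : A i j + A j i = 1 :=
    (hK _).resolve_left fun h' => h.2 ⟨h.1, .inl h'⟩
  exact (not_cliqueFree_three_or_compl hι G).elim (of_triangle hG) (of_triangle hGc)

section CharTwo

variable [CharP K 2]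

theorem exists_mul_add_mul_eq_zero_mul_ne {c x y : K} (hc₀ : c ≠ 0) (hc₁ : c ≠ 1)
    (hxy : x = 0 ↔ y = 0) : ∃ s t : K, s ≠ 0 ∧ t ≠ 0 ∧ s * x + t * y = 0 ∧ s * t ≠ 1 + c := by
  obtain ⟨s, t, hs, ht, hst⟩ := exists_mul_add_mul_eq_zero hxy
  by_cases h : s * t = 1 + c
  · refine ⟨c * s, c * t, mul_ne_zero hc₀ hs, mul_ne_zero hc₀ ht, by linear_combination c * hst,
      fun h' => hc₁ ?_⟩
    have hcube : (c + 1) ^ 3 = 0 := by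
      linear_combination h' - c ^ 2 * h + (c + 1) ^ 2 * CharTwo.two_eq_zero (R := K)
    exact CharTwo.add_eq_zero.1 (pow_eq_zero_iff three_ne_zero |>.1 hcube)
  · exact ⟨s, t, hs, ht, hst, h⟩

theorem natCast_two_mul_add_one_eq_one (b : ℕ) : ((2 * b + 1 : ℕ) : K) = 1 := by
  simp [CharTwo.two_eq_zero]

theorem three_eq_one : (3 : K) = 1 := (CharTwo.ofNat_eq_mod 3).trans Nat.cast_one

theorem hasSlRegularFactor_of_balanced_of_charTwo {b : ℕ}
    {A : Matrix (Fin (2 * (2 * b + 2) + 2)) (Fin (2 * (2 * b + 2) + 2)) K} (hA : A.diag = 0)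
    {i j : Fin (2 * (2 * b + 2) + 2)} (hij : i ≠ j) (hAij : A i j = 0 ↔ A j i = 0) {c : K}
    (hc₀ : c ≠ 0) (hc₁ : c ≠ 1) : HasSlRegularFactor A := by
  obtain ⟨s, t, hs, ht, hst, hst₁⟩ := exists_mul_add_mul_eq_zero_mul_ne hc₀ hc₁ hAij.symm
  obtain ⟨l, hli, hlj⟩ := Fin.exists_ne_and_ne_of_two_lt i j (by omega)
  have he : Function.Injective ![i, j, l] := by
    intro x y
    fin_cases x <;> fin_cases y <;> simp [hij, hij.symm, hli, hlj, hli.symm, hlj.symm]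
  refine hasSlRegularFactor_of_submatrix hA he (m := 2 * (2 * b + 1) + 1)
    (by simp only [Fintype.card_fin]; omega)
    (S := !![0, s, 0; t, c, 0; 0, 0, c]) (Z := 1)
    (isRegularFactor_fin_three c hs ht (funext fun _ => congrFun hA _) (by simpa using hst)) ?_ ?_
    (Commute.one_right _) (by simp [three_eq_one]) .one ?_
  · simp [det_fin_three, hs, ht, hc₀]
  · have hdet : (1 - !![0, s, 0; t, c, 0; 0, 0, c]).det = (s * t - (1 + c)) * (c - 1) := by
      simp only [det_fin_three, Matrix.sub_apply, one_apply, Fin.reduceEq, if_true, if_false,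
        of_apply, cons_val]
      linear_combination (c ^ 2 - c) * CharTwo.two_eq_zero (R := K)
    rw [hdet]
    exact mul_ne_zero (sub_ne_zero.2 hst₁) (sub_ne_zero.2 hc₁)
  · rw [sum_range_two_mul_add_one_altSeq, natCast_two_mul_add_one_eq_one, trace_fin_three_of]
    linear_combination (c + 1) * CharTwo.two_eq_zero (R := K)

theorem hasSlRegularFactor_of_forall_eq_zero_or_one (hK : ∀ c : K, c = 0 ∨ c = 1) {b : ℕ}
    {A : Matrix (Fin (2 * (2 * b + 2) + 2)) (Fin (2 * (2 * b + 2) + 2)) K} (hA : A.diag = 0) :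
    HasSlRegularFactor A := by
  obtain ⟨i, j, k, hij, hik, hjk, h₁, h₂⟩ := exists_triple_add_swap_eq hK
    (by rw [Fintype.card_fin]; omega) A
  have he : Function.Injective ![i, j, k] := by
    intro x y
    fin_cases x <;> fin_cases y <;> simp [hij, hij.symm, hik, hjk, hik.symm, hjk.symm]
  refine hasSlRegularFactor_of_submatrix hA he (m := 2 * (2 * b + 1) + 1)
    (by simp only [Fintype.card_fin]; omega)
    (S := !![0, 1, 0; 1, 0, 1; 0, 1, 1]) (Z := 1)
    (isRegularFactor_fin_three_of_charTwo (funext fun _ => congrFun hA _) (by simpa using h₁)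
      (by simpa using h₂)) ?_ ?_
    (Commute.one_right _) (by simp [three_eq_one]) .zero ?_
  · simp [det_fin_three]
  · simp [det_fin_three]
  · rw [sum_range_two_mul_add_one_altSeq, natCast_two_mul_add_one_eq_one, trace_fin_three_of]
    linear_combination CharTwo.two_eq_zero (R := K)

end CharTwo

theorem hasSlRegularFactor_of_even {n : ℕ} (hn : (n : K) = 0) (h3 : 3 ≤ n) (heven : Even n)
    {A : Matrix (Fin n) (Fin n) K} (hA : A.diag = 0) : HasSlRegularFactor A := by
  obtain ⟨B, hAB, hB, i, j, hij, hBij⟩ := exists_isSimilar_diag_zero_balanced hA (by simpa)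
  refine hAB.hasSlRegularFactor ?_
  obtain ⟨a, rfl⟩ : ∃ a, n = 2 * a + 2 := by
    obtain ⟨r, rfl⟩ := heven
    exact ⟨r - 1, by omega⟩
  have hprod : (2 : K) * (a + 1) = 0 := by
    push_cast at hn
    linear_combination hn
  by_cases ha : (a : K) + 1 = 0
  · exact hasSlRegularFactor_of_balanced (eq_neg_of_add_eq_zero_left ha) hB hij hBij
  have : CharP K 2 :=
    CharTwo.of_one_ne_zero_of_two_eq_zero one_ne_zero ((mul_eq_zero.1 hprod).resolve_right ha)
  obtain ⟨b, rfl⟩ : ∃ b, a = 2 * b + 2 := by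
    obtain ⟨r, rfl⟩ | ⟨r, rfl⟩ := a.even_or_odd
    · exact ⟨r - 1, by omega⟩
    · exact absurd (by rw [natCast_two_mul_add_one_eq_one, CharTwo.add_self_eq_zero]) ha
  by_cases hK : ∀ c : K, c = 0 ∨ c = 1
  · exact hasSlRegularFactor_of_forall_eq_zero_or_one hK hB
  · push Not at hK
    obtain ⟨c, hc₀, hc₁⟩ := hK
    exact hasSlRegularFactor_of_balanced_of_charTwo hB hij hBij hc₀ hc₁

theorem hasSlRegularFactor_of_notMem_range_scalar {n : ℕ} (hn : 3 ≤ n)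
    {A : Matrix (Fin n) (Fin n) K} (hA : A ∉ Set.range (scalar (Fin n))) (htr : A.trace = 0) :
    HasSlRegularFactor A := by
  by_cases hnK : (n : K) = 0
  swap
  · exact hasSlRegularFactor_of_card_ne_zero hnK hA htr
  obtain ⟨B, hAB, hB⟩ : ∃ B : Matrix (Fin n) (Fin n) K, IsSimilar A B ∧ B.diag = 0 := by
    obtain ⟨m, rfl⟩ := Nat.exists_eq_add_of_le' (show 2 ≤ n by omega)
    exact exists_isSimilar_diag_eq hA 0 (by simpa using htr)
  refine hAB.hasSlRegularFactor ?_
  rcases n.even_or_odd with heven | hodd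
  · exact hasSlRegularFactor_of_even hnK hn heven hB
  · exact hasSlRegularFactor_of_odd hnK hodd hB

/-! ### Scalar matrices -/

/-- The matrix with first subdiagonal `c, 2 * c, 3 * c, …` and zeros elsewhere. In the basis
`x ^ i / i!` of truncated divided powers, `upperShift` is the derivative and this is multiplication
by `c * x`. -/
def lowerShift (c : R) (m : ℕ) : Matrix (Fin m) (Fin m) R :=
  of fun i j => if (i : ℕ) = j + 1 then (i : ℕ) * c else 0

theorem trace_upperShift (m : ℕ) : (upperShift R m).trace = 0 := by
  simp [upperShift, trace]

theorem trace_lowerShift (c : R) (m : ℕ) : (lowerShift c m).trace = 0 := by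
  simp [lowerShift, trace]

theorem upperShift_mul_lowerShift {m : ℕ} {c : R} (hc : (m : R) * c = 0) :
    upperShift R m * lowerShift c m = diagonal fun i : Fin m => ((i : ℕ) + 1 : R) * c := by
  ext i j
  rw [mul_apply, diagonal_apply]
  rcases (show (i : ℕ) + 1 ≤ m from i.2).lt_or_eq with hi | hi
  · rw [Finset.sum_eq_single ⟨i + 1, hi⟩ (fun k _ hk => ?_) (by simp)]
    · simp [upperShift, lowerShift, Fin.ext_iff]
    · simp [upperShift, show (k : ℕ) ≠ i + 1 from fun h => hk (Fin.ext h)]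
  · have hi' : ((i : ℕ) + 1 : R) * c = 0 := by rw [← Nat.cast_succ, Nat.succ_eq_add_one, hi, hc]
    rw [Finset.sum_eq_zero fun k _ => ?_, hi', ite_self]
    simp [upperShift, show (k : ℕ) ≠ i + 1 by omega]

theorem lowerShift_mul_upperShift (c : R) (m : ℕ) :
    lowerShift c m * upperShift R m = diagonal fun i : Fin m => ((i : ℕ) : R) * c := by
  ext i j
  rw [mul_apply, diagonal_apply]
  rcases Nat.eq_zero_or_pos i with hi | hi
  · simp [lowerShift, hi]
  · rw [Finset.sum_eq_single ⟨i - 1, by omega⟩ (fun k _ hk => ?_) (by simp)]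
    · simp [upperShift, lowerShift, Fin.ext_iff, Nat.sub_add_cancel hi, eq_comm]
    · have hk' : (i : ℕ) ≠ k + 1 := fun h => hk (Fin.ext (by simp [h]))
      simp [lowerShift, hk']

theorem lie_upperShift_lowerShift {m : ℕ} {c : R} (hc : (m : R) * c = 0) :
    ⁅upperShift R m, lowerShift c m⁆ = c • 1 := by
  rw [Ring.lie_def, upperShift_mul_lowerShift hc, lowerShift_mul_upperShift, diagonal_sub,
    smul_one_eq_diagonal]
  simp [add_mul]

theorem exists_isCyclicVector_upperShift (m : ℕ) : ∃ v, IsCyclicVector (upperShift R m) v := by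
  simpa [bidiag] using exists_isCyclicVector_bidiag (0 : ℕ → R) m

/-! ### Dimensions of centralizers -/

theorem IsCyclicVector.finrank_glCent [Nontrivial R] {n : ℕ} {M : Matrix (Fin n) (Fin n) R}
    {v : Fin n → R} (hv : IsCyclicVector M v) : finrank R (glCent M) = n := by
  have h : glCent M = Subalgebra.toSubmodule (Subalgebra.centralizer R {M}) := by
    ext Z
    simp [Subalgebra.mem_centralizer_iff, glCent]
  rw [h]
  simpa using hv.finrank_centralizer

theorem finrank_slCent {n : ℕ} {M Z : Matrix (Fin n) (Fin n) K} (hMZ : Commute M Z)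
    (hZ : Z.trace ≠ 0) : finrank K (slCent M) = finrank K (glCent M) - 1 := by
  let f : glCent M →ₗ[K] K := (traceLinearMap (Fin n) K K).comp (glCent M).subtype
  have hf : f ≠ 0 := fun h => hZ (LinearMap.congr_fun h ⟨Z, hMZ⟩)
  have hsl : slCent M = (LinearMap.ker f).map (glCent M).subtype := by
    ext W
    exact ⟨fun ⟨hW, hMW⟩ => ⟨⟨W, hMW⟩, hW, rfl⟩, fun ⟨⟨_, hMW⟩, hW, h⟩ => h ▸ ⟨hW, hMW⟩⟩
  have hrank := f.finrank_range_add_finrank_ker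
  rw [LinearMap.range_eq_top.2 (LinearMap.surjective hf), finrank_top, finrank_self] at hrank
  rw [hsl, Submodule.finrank_map_subtype_eq, ← hrank, Nat.add_sub_cancel_left]

theorem HasSlRegularFactor.exists_lie_eq {n : ℕ} {A : Matrix (Fin n) (Fin n) K}
    (h : HasSlRegularFactor A) :
    ∃ X Y : Matrix (Fin n) (Fin n) K,
      X.trace = 0 ∧ Y.trace = 0 ∧ ⁅X, Y⁆ = A ∧ finrank K (slCent X) = n - 1 := by
  obtain ⟨X, Z, hX, hXtr, hXZ, hZ⟩ := h
  obtain ⟨Y, hY⟩ := hX.exists_lie_eq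
  obtain ⟨v, hv⟩ := hX.exists_isCyclicVector
  refine ⟨X, Y - (Y.trace / Z.trace) • Z, hXtr, ?_, ?_, ?_⟩
  · simp [hZ]
  · rw [← hY, Ring.lie_def, Ring.lie_def, mul_sub, sub_mul, (hXZ.smul_right _).eq,
      sub_sub_sub_cancel_right]
  · rw [finrank_slCent hXZ hZ, hv.finrank_glCent]

end RegularCommutator

/-- Every trace-zero matrix over a field is a commutator of trace-zero matrices (for `n ≥ 3`).
Moreover `X` can be chosen `gl_n(K)`-regular when `A` is scalar, and `sl_n(K)`-regular when
`A` is non-scalar. -/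
theorem trace_zero_is_commutator_field {K : Type*} [Field K] {n : ℕ} (hn : 3 ≤ n)
    (A : Matrix (Fin n) (Fin n) K) (hA : A.trace = 0) :
    ∃ X Y : Matrix (Fin n) (Fin n) K,
      X.trace = 0 ∧ Y.trace = 0 ∧ X * Y - Y * X = A ∧
      ((∃ c : K, A = c • (1 : Matrix (Fin n) (Fin n) K)) →
        Module.finrank K (glCent X) = n) ∧
      (¬ (∃ c : K, A = c • (1 : Matrix (Fin n) (Fin n) K)) →
        Module.finrank K (slCent X) = n - 1) := by
  by_cases hscalar : ∃ c : K, A = c • (1 : Matrix (Fin n) (Fin n) K)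
  · obtain ⟨c, rfl⟩ := hscalar
    have hc : (n : K) * c = 0 := by simpa [mul_comm] using hA
    obtain ⟨v, hv⟩ := RegularCommutator.exists_isCyclicVector_upperShift (R := K) n
    exact ⟨RegularCommutator.upperShift K n, RegularCommutator.lowerShift c n,
      RegularCommutator.trace_upperShift n, RegularCommutator.trace_lowerShift c n,
      RegularCommutator.lie_upperShift_lowerShift hc,
      fun _ => hv.finrank_glCent, fun h => absurd ⟨c, rfl⟩ h⟩
  · have hA' : A ∉ Set.range (scalar (Fin n)) := fun ⟨c, hc⟩ =>
      hscalar ⟨c, by rw [← hc, smul_one_eq_diagonal, scalar_apply]⟩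
    obtain ⟨X, Y, hX, hY, hXY, hrank⟩ :=
      (RegularCommutator.hasSlRegularFactor_of_notMem_range_scalar hn hA' hA).exists_lie_eq
    exact ⟨X, Y, hX, hY, hXY, fun h => absurd h hscalar, fun _ => hrank⟩
end
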